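/- Let u be a global solution of ∂_t²u - Δu = -|u|^{p-1}u on ℝ^d with conserved energy E, satisfying: (i) finite speed of energy propagation (the energy in any shrinking backward cone region is monotone as in Proposition 'energy flux'), (ii) the Morawetz consequence ∫_{|t'|>R}∫_{|x|<R} e(u) dx dt' ≤ ∫_{-R}^{R}∫_{|x|>R} e(u) dx dt' for all R > 0, and (iii) E_κ(u₀,u₁) = ∫_{ℝ^d}(1+|x|^κ) e(u₀,u₁)(x) dx < ∞ for some κ ∈ (0,1), where e(u) = |∇u|²/2 + |u_t|²/2 + |u|^{p+1}/(p+1). Then for every c > 0, lim_{t→+∞} ∫_{|x| < t - c t^{1-κ}} e(u)(x,t) dx = 0. -/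

import Mathlib

open MeasureTheory Real Filter

namespace WaveDecay

section LineDerivatives

variable {V : Type*} [AddCommGroup V] [Module ℝ V]

lemma hasLineDerivAt_congr_deriv {f : V → ℝ} {f' g' : ℝ} {x v : V}
    (hf : HasLineDerivAt ℝ f f' x v) (h : f' = g') : HasLineDerivAt ℝ f g' x v :=
  h ▸ hf

lemma hasLineDerivAt_add {f g : V → ℝ} {f' g' : ℝ} {x v : V}
    (hf : HasLineDerivAt ℝ f f' x v) (hg : HasLineDerivAt ℝ g g' x v) :
    HasLineDerivAt ℝ (fun y => f y + g y) (f' + g') x v :=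
  HasDerivAt.add hf hg

lemma hasLineDerivAt_sub {f g : V → ℝ} {f' g' : ℝ} {x v : V}
    (hf : HasLineDerivAt ℝ f f' x v) (hg : HasLineDerivAt ℝ g g' x v) :
    HasLineDerivAt ℝ (fun y => f y - g y) (f' - g') x v :=
  HasDerivAt.sub hf hg

lemma hasLineDerivAt_mul {f g : V → ℝ} {f' g' : ℝ} {x v : V}
    (hf : HasLineDerivAt ℝ f f' x v) (hg : HasLineDerivAt ℝ g g' x v) :
    HasLineDerivAt ℝ (fun y => f y * g y) (f' * g x + f x * g') x v := by
  have h := HasDerivAt.fun_mul hf hg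
  simp only [zero_smul, add_zero] at h
  exact h

lemma hasLineDerivAt_const_mul {f : V → ℝ} {f' : ℝ} {x v : V} (c : ℝ)
    (hf : HasLineDerivAt ℝ f f' x v) :
    HasLineDerivAt ℝ (fun y => c * f y) (c * f') x v :=
  HasDerivAt.const_mul c hf

lemma hasLineDerivAt_sum {ι : Type*} {s : Finset ι} {f : ι → V → ℝ} {f' : ι → ℝ} {x v : V}
    (hf : ∀ i ∈ s, HasLineDerivAt ℝ (f i) (f' i) x v) :
    HasLineDerivAt ℝ (fun y => ∑ i ∈ s, f i y) (∑ i ∈ s, f' i) x v :=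
  HasDerivAt.fun_sum hf

lemma hasLineDerivAt_comp {f : V → ℝ} {f' : ℝ} {x v : V} {φ : ℝ → ℝ} {φ' : ℝ}
    (hφ : HasDerivAt φ φ' (f x)) (hf : HasLineDerivAt ℝ f f' x v) :
    HasLineDerivAt ℝ (fun y => φ (f y)) (φ' * f') x v := by
  have h : HasDerivAt φ φ' ((fun s : ℝ => f (x + s • v)) 0) := by simpa using hφ
  exact h.comp (0 : ℝ) hf

lemma hasLineDerivAt_pow {f : V → ℝ} {f' : ℝ} {x v : V} (n : ℕ)
    (hf : HasLineDerivAt ℝ f f' x v) :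
    HasLineDerivAt ℝ (fun y => f y ^ n) (n * f x ^ (n - 1) * f') x v :=
  hasLineDerivAt_comp (hasDerivAt_pow n (f x)) hf

end LineDerivatives

variable {d : ℕ}

/-- The `i`-th standard basis vector of Euclidean space. -/
noncomputable abbrev basisVec (i : Fin d) : EuclideanSpace ℝ (Fin d) := EuclideanSpace.single i 1

lemma hasLineDerivAt_coord (x : EuclideanSpace ℝ (Fin d)) (i j : Fin d) :
    HasLineDerivAt ℝ (fun y : EuclideanSpace ℝ (Fin d) => y j) (if i = j then 1 else 0) x
      (basisVec i) := by
  have h : HasDerivAt (fun s : ℝ => x j + s * (if i = j then (1 : ℝ) else 0))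
      (1 * (if i = j then (1 : ℝ) else 0)) 0 :=
    ((hasDerivAt_id (0 : ℝ)).mul_const _).const_add _
  rw [one_mul] at h
  refine h.congr_of_eventuallyEq (Eventually.of_forall fun s => ?_)
  simp [basisVec, eq_comm]

/-- The inverse Japanese bracket `(1 + |x|²)^(-1/2)`. -/
noncomputable def invBracket (x : EuclideanSpace ℝ (Fin d)) : ℝ :=
  (√(1 + ∑ i, x i ^ 2))⁻¹

lemma invBracket_pos (x : EuclideanSpace ℝ (Fin d)) : 0 < invBracket x := by
  unfold invBracket; positivity

lemma invBracket_sq_mul (x : EuclideanSpace ℝ (Fin d)) :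
    invBracket x ^ 2 * (1 + ∑ i, x i ^ 2) = 1 := by
  have h : (0 : ℝ) < 1 + ∑ i, x i ^ 2 := by positivity
  rw [invBracket, inv_pow, Real.sq_sqrt h.le]
  exact inv_mul_cancel₀ h.ne'

lemma invBracket_sq_mul_sum (x : EuclideanSpace ℝ (Fin d)) :
    invBracket x ^ 2 * ∑ i, x i ^ 2 = 1 - invBracket x ^ 2 := by
  linarith [invBracket_sq_mul x, mul_add (invBracket x ^ 2) 1 (∑ i, x i ^ 2)]

lemma invBracket_le_one (x : EuclideanSpace ℝ (Fin d)) : invBracket x ≤ 1 := by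
  have h := invBracket_sq_mul_sum x
  have h' : 0 ≤ invBracket x ^ 2 * ∑ i, x i ^ 2 := by positivity
  nlinarith [invBracket_pos x]

lemma abs_coord_mul_invBracket_le (x : EuclideanSpace ℝ (Fin d)) (i : Fin d) :
    |x i * invBracket x| ≤ 1 := by
  have h := invBracket_sq_mul_sum x
  have h' : x i ^ 2 ≤ ∑ i, x i ^ 2 :=
    Finset.single_le_sum (f := fun i => x i ^ 2) (fun i _ => sq_nonneg _) (Finset.mem_univ i)
  rw [← sq_le_one_iff_abs_le_one]
  nlinarith [mul_le_mul_of_nonneg_left h' (sq_nonneg (invBracket x)), sq_nonneg (invBracket x)]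

@[fun_prop]
lemma continuous_invBracket :
    Continuous (invBracket : EuclideanSpace ℝ (Fin d) → ℝ) := by
  unfold invBracket
  refine Continuous.inv₀ (by fun_prop) fun x => ?_
  positivity

lemma le_invBracket_of_norm_le {R : ℝ} {x : EuclideanSpace ℝ (Fin d)} (hx : ‖x‖ ≤ R) :
    (√(1 + R ^ 2))⁻¹ ≤ invBracket x := by
  rw [invBracket, ← EuclideanSpace.real_norm_sq_eq]
  gcongr

lemma hasLineDerivAt_sum_sq (x : EuclideanSpace ℝ (Fin d)) (i : Fin d) :
    HasLineDerivAt ℝ (fun y : EuclideanSpace ℝ (Fin d) => ∑ j, y j ^ 2) (2 * x i) x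
      (basisVec i) := by
  refine hasLineDerivAt_congr_deriv (hasLineDerivAt_sum (s := Finset.univ) fun j _ =>
    hasLineDerivAt_pow 2 (hasLineDerivAt_coord x i j)) ?_
  simp

lemma hasDerivAt_inv_sqrt_one_add {r : ℝ} (hr : 0 ≤ r) :
    HasDerivAt (fun s : ℝ => (√(1 + s))⁻¹) (-((√(1 + r))⁻¹ ^ 3 / 2)) r := by
  have hpos : (0 : ℝ) < 1 + r := by positivity
  have hne : √(1 + r) ≠ 0 := by positivity
  refine (HasDerivAt.fun_inv (((hasDerivAt_id' r).const_add 1).sqrt hpos.ne') hne).congr_deriv ?_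
  field_simp

lemma hasLineDerivAt_invBracket (x : EuclideanSpace ℝ (Fin d)) (i : Fin d) :
    HasLineDerivAt ℝ invBracket (-(x i * invBracket x ^ 3)) x (basisVec i) := by
  have hφ := hasDerivAt_inv_sqrt_one_add (r := ∑ j, x j ^ 2)
    (Finset.sum_nonneg fun j _ => sq_nonneg (x j))
  refine hasLineDerivAt_congr_deriv (hasLineDerivAt_comp
    (f := fun y : EuclideanSpace ℝ (Fin d) => ∑ j, y j ^ 2) hφ (hasLineDerivAt_sum_sq x i)) ?_
  rw [invBracket]
  ring

/-- Integration by parts in a coordinate direction. -/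
lemma integral_mul_lineDeriv_eq_neg {f f' g g' : EuclideanSpace ℝ (Fin d) → ℝ}
    {v : EuclideanSpace ℝ (Fin d)}
    (hf'g : Integrable fun x => f' x * g x) (hfg' : Integrable fun x => f x * g' x)
    (hfg : Integrable fun x => f x * g x)
    (hf : ∀ x, HasLineDerivAt ℝ f (f' x) x v) (hg : ∀ x, HasLineDerivAt ℝ g (g' x) x v) :
    ∫ x, f x * g' x = -∫ x, f' x * g x :=
  integral_bilinear_hasLineDerivAt_right_eq_neg_left_of_integrable
    (B := ContinuousLinearMap.mul ℝ ℝ) hf'g hfg' hfg (fun x _ => hf x) (fun x _ => hg x)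

/-! ### A Hardy inequality -/

/-- Soft thresholding of a real number at level `ε`. -/
noncomputable def softThreshold (ε s : ℝ) : ℝ := max (s - ε) 0 - max (-s - ε) 0

@[fun_prop]
lemma continuous_softThreshold (ε : ℝ) : Continuous (softThreshold ε) := by
  unfold softThreshold; fun_prop

lemma hasDerivAt_sq_max_zero (s : ℝ) :
    HasDerivAt (fun r : ℝ => max r 0 ^ 2) (2 * max s 0) s := by
  refine hasDerivAt_of_hasDerivAt_of_ne' (g := fun r => 2 * max r 0) (x := 0) (fun y hy => ?_)
    (by fun_prop) (by fun_prop) s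
  rcases lt_or_gt_of_ne hy with h | h
  · rw [max_eq_right h.le, mul_zero]
    refine (hasDerivAt_const y (0 : ℝ)).congr_of_eventuallyEq ?_
    filter_upwards [Iio_mem_nhds h] with r hr
    simp [max_eq_right (le_of_lt (Set.mem_Iio.1 hr))]
  · rw [max_eq_left h.le]
    have h2 : HasDerivAt (fun r : ℝ => r ^ 2) (2 * y) y := by simpa using hasDerivAt_pow 2 y
    refine h2.congr_of_eventuallyEq ?_
    filter_upwards [Ioi_mem_nhds h] with r hr
    simp [max_eq_left (le_of_lt (Set.mem_Ioi.1 hr))]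

lemma softThreshold_sq {ε : ℝ} (hε : 0 < ε) (s : ℝ) :
    softThreshold ε s ^ 2 = max (s - ε) 0 ^ 2 + max (-s - ε) 0 ^ 2 := by
  unfold softThreshold
  rcases le_total 0 s with h | h
  · rw [max_eq_right (by linarith : -s - ε ≤ 0)]; ring
  · rw [max_eq_right (by linarith : s - ε ≤ 0)]; ring

lemma hasDerivAt_softThreshold_sq {ε : ℝ} (hε : 0 < ε) (s : ℝ) :
    HasDerivAt (fun r => softThreshold ε r ^ 2) (2 * softThreshold ε s) s := by
  simp_rw [softThreshold_sq hε]
  have h1 : HasDerivAt (fun r : ℝ => max (r - ε) 0 ^ 2) (2 * max (s - ε) 0 * 1) s :=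
    (hasDerivAt_sq_max_zero (s - ε)).comp (h := fun r => r - ε) s ((hasDerivAt_id' s).sub_const ε)
  have h2 : HasDerivAt (fun r : ℝ => max (-r - ε) 0 ^ 2) (2 * max (-s - ε) 0 * (-1)) s :=
    (hasDerivAt_sq_max_zero (-s - ε)).comp (h := fun r => -r - ε) s
      ((hasDerivAt_id' s).fun_neg.sub_const ε)
  refine (h1.add h2).congr_deriv ?_
  unfold softThreshold; ring

lemma abs_softThreshold_sub_le {ε : ℝ} (hε : 0 < ε) (s : ℝ) : |softThreshold ε s - s| ≤ ε := by
  unfold softThreshold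
  rw [abs_le]
  rcases max_cases (s - ε) 0 with h | h <;> rcases max_cases (-s - ε) 0 with h' | h' <;>
    constructor <;> linarith [h.1, h'.1]

lemma softThreshold_sq_le {ε p : ℝ} (hε : 0 < ε) (hp : 1 < p) (s : ℝ) :
    softThreshold ε s ^ 2 ≤ ε ^ (1 - p) * |s| ^ (p + 1) := by
  by_cases hs : |s| ≤ ε
  · have h : softThreshold ε s = 0 := by
      rw [abs_le] at hs
      simp [softThreshold, max_eq_right (by linarith : s - ε ≤ 0),
        max_eq_right (by linarith : -s - ε ≤ 0)]
    rw [h, zero_pow two_ne_zero]; positivity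
  · push Not at hs
    have h1 : softThreshold ε s ^ 2 ≤ |s| ^ 2 := by
      rw [sq_le_sq, abs_abs]
      unfold softThreshold
      rcases abs_cases s with ha | ha <;> rw [abs_le] <;>
      rcases max_cases (s - ε) 0 with h | h <;> rcases max_cases (-s - ε) 0 with h' | h' <;>
        constructor <;> linarith [h.1, h'.1]
    have hs0 : 0 < |s| := hε.trans hs
    have h2 : |s| ^ 2 = |s| ^ (1 - p) * |s| ^ (p + 1) := by
      rw [← Real.rpow_add hs0, ← Real.rpow_natCast]
      congr 1; push_cast; ring
    rw [h2] at h1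
    refine h1.trans (mul_le_mul_of_nonneg_right ?_ (by positivity))
    exact Real.rpow_le_rpow_of_nonpos hε hs.le (by linarith)

lemma hasLineDerivAt_coord_mul_invBracket_sq (x : EuclideanSpace ℝ (Fin d)) (i : Fin d) :
    HasLineDerivAt ℝ (fun y : EuclideanSpace ℝ (Fin d) => y i * invBracket y ^ 2)
      (invBracket x ^ 2 - 2 * x i ^ 2 * invBracket x ^ 4) x (basisVec i) := by
  refine hasLineDerivAt_congr_deriv (hasLineDerivAt_mul (hasLineDerivAt_coord x i i)
    (hasLineDerivAt_pow 2 (hasLineDerivAt_invBracket x i))) ?_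
  simp only [if_true]; push_cast; ring

/-- The Hardy inequality for thresholded functions, which are square integrable. -/
lemma integral_invBracket_sq_mul_softThreshold_sq_le (hd : 3 ≤ d) {p ε : ℝ} (hp : 1 < p)
    (hε : 0 < ε) {f : EuclideanSpace ℝ (Fin d) → ℝ} {w : Fin d → EuclideanSpace ℝ (Fin d) → ℝ}
    (hf : Continuous f) (hw : ∀ i, Continuous (w i))
    (hfw : ∀ i x, HasLineDerivAt ℝ f (w i x) x (basisVec i))
    (hfp : Integrable fun x => |f x| ^ (p + 1)) (hwi : Integrable fun x => ∑ i, w i x ^ 2) :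
    Integrable (fun x => invBracket x ^ 2 * softThreshold ε (f x) ^ 2) ∧
      ∫ x, invBracket x ^ 2 * softThreshold ε (f x) ^ 2 ≤ 4 * ∫ x, ∑ i, w i x ^ 2 := by
  have hH : Integrable fun x => softThreshold ε (f x) ^ 2 := by
    refine (hfp.const_mul (ε ^ (1 - p))).mono' (by fun_prop) (ae_of_all _ fun x => ?_)
    rw [Real.norm_of_nonneg (sq_nonneg _)]
    exact softThreshold_sq_le hε hp _
  have hq1 : ∀ x : EuclideanSpace ℝ (Fin d), invBracket x ^ 2 ≤ 1 := fun x =>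
    pow_le_one₀ (invBracket_pos x).le (invBracket_le_one x)
  have hqH : Integrable fun x => invBracket x ^ 2 * softThreshold ε (f x) ^ 2 := by
    refine hH.mono' (by fun_prop) (ae_of_all _ fun x => ?_)
    rw [Real.norm_of_nonneg (by positivity)]
    exact mul_le_of_le_one_left (sq_nonneg _) (hq1 x)
  refine ⟨hqH, ?_⟩
  have hX : ∀ (x : EuclideanSpace ℝ (Fin d)) (i : Fin d), |x i * invBracket x ^ 2| ≤ 1 := by
    intro x i
    have h := abs_coord_mul_invBracket_le x i
    rw [pow_two, ← mul_assoc, abs_mul]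
    refine mul_le_one₀ h (abs_nonneg _) ?_
    rw [abs_of_pos (invBracket_pos x)]; exact invBracket_le_one x
  have hA : ∀ i : Fin d, Integrable fun x : EuclideanSpace ℝ (Fin d) =>
      (invBracket x ^ 2 - 2 * x i ^ 2 * invBracket x ^ 4) * softThreshold ε (f x) ^ 2 := by
    intro i
    refine (hH.const_mul 3).mono' (by fun_prop) (ae_of_all _ fun x => ?_)
    rw [norm_mul, Real.norm_of_nonneg (sq_nonneg (softThreshold ε (f x)))]
    refine mul_le_mul_of_nonneg_right ?_ (sq_nonneg _)
    have h1 := hq1 x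
    have h2 : (x i * invBracket x ^ 2) ^ 2 ≤ 1 := (sq_le_one_iff_abs_le_one _).2 (hX x i)
    rw [Real.norm_eq_abs, abs_le]
    constructor <;> nlinarith [sq_nonneg (invBracket x), sq_nonneg (x i * invBracket x ^ 2)]
  have hB : ∀ i : Fin d, Integrable fun x : EuclideanSpace ℝ (Fin d) =>
      (x i * invBracket x ^ 2) * (2 * softThreshold ε (f x) * w i x) := by
    intro i
    refine (hH.add hwi).mono' (by fun_prop) (ae_of_all _ fun x => ?_)
    have h1 : w i x ^ 2 ≤ ∑ i, w i x ^ 2 :=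
      Finset.single_le_sum (f := fun i => w i x ^ 2) (fun i _ => sq_nonneg _) (Finset.mem_univ i)
    rw [norm_mul]
    refine (mul_le_of_le_one_left (norm_nonneg _) (hX x i)).trans ?_
    rw [Real.norm_eq_abs, Pi.add_apply]
    refine le_trans ?_ (add_le_add_right h1 _)
    rw [abs_le]
    constructor <;> nlinarith [sq_nonneg (softThreshold ε (f x) + w i x),
      sq_nonneg (softThreshold ε (f x) - w i x)]
  have hC : ∀ i : Fin d, Integrable fun x : EuclideanSpace ℝ (Fin d) =>
      (x i * invBracket x ^ 2) * softThreshold ε (f x) ^ 2 := by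
    intro i
    refine hH.mono' (by fun_prop) (ae_of_all _ fun x => ?_)
    rw [norm_mul, Real.norm_of_nonneg (sq_nonneg (softThreshold ε (f x)))]
    exact mul_le_of_le_one_left (sq_nonneg _) (hX x i)
  have hparts : ∀ i : Fin d, ∫ x : EuclideanSpace ℝ (Fin d),
      (x i * invBracket x ^ 2) * (2 * softThreshold ε (f x) * w i x) =
      -∫ x : EuclideanSpace ℝ (Fin d),
        (invBracket x ^ 2 - 2 * x i ^ 2 * invBracket x ^ 4) * softThreshold ε (f x) ^ 2 :=
    fun i => integral_mul_lineDeriv_eq_neg (hA i) (hB i) (hC i)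
      (fun x => hasLineDerivAt_coord_mul_invBracket_sq x i)
      (fun x => hasLineDerivAt_comp (hasDerivAt_softThreshold_sq hε (f x)) (hfw i x))
  have hsum : ∫ x : EuclideanSpace ℝ (Fin d), ∑ i,
        ((x i * invBracket x ^ 2) * (2 * softThreshold ε (f x) * w i x) +
        (invBracket x ^ 2 - 2 * x i ^ 2 * invBracket x ^ 4) * softThreshold ε (f x) ^ 2) = 0 := by
    rw [integral_finsetSum _ fun i _ => by exact (hB i).add (hA i)]
    refine Finset.sum_eq_zero fun i _ => ?_
    rw [integral_add (hB i) (hA i), hparts i]; ring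
  have hmono : ∫ x : EuclideanSpace ℝ (Fin d),
      (1 / 2 * (invBracket x ^ 2 * softThreshold ε (f x) ^ 2) - 2 * ∑ i, w i x ^ 2) ≤
      ∫ x : EuclideanSpace ℝ (Fin d), ∑ i,
        ((x i * invBracket x ^ 2) * (2 * softThreshold ε (f x) * w i x) +
        (invBracket x ^ 2 - 2 * x i ^ 2 * invBracket x ^ 4) * softThreshold ε (f x) ^ 2) := by
    refine integral_mono ((hqH.const_mul _).sub (hwi.const_mul _))
      (integrable_finsetSum _ fun i _ => (hB i).add (hA i)) fun x => ?_
    set q := invBracket x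
    set r := softThreshold ε (f x)
    have hqs : q ^ 2 * ∑ i, x i ^ 2 = 1 - q ^ 2 := invBracket_sq_mul_sum x
    have hCS : (∑ i, x i * w i x) ^ 2 ≤ (∑ i, x i ^ 2) * ∑ i, w i x ^ 2 :=
      Finset.sum_mul_sq_le_sq_mul_sq _ _ _
    set S := ∑ i, x i * w i x with hS
    set W := ∑ i, w i x ^ 2 with hW
    set N := ∑ i, x i ^ 2 with hN
    have hW0 : 0 ≤ W := by positivity
    have e1 : ∑ i, ((x i * q ^ 2) * (2 * r * w i x) + (q ^ 2 - 2 * x i ^ 2 * q ^ 4) * r ^ 2) =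
        2 * r * q ^ 2 * S + (d * q ^ 2 - 2 * q ^ 4 * N) * r ^ 2 := by
      have : ∀ i, (x i * q ^ 2) * (2 * r * w i x) + (q ^ 2 - 2 * x i ^ 2 * q ^ 4) * r ^ 2 =
          2 * r * q ^ 2 * (x i * w i x) + q ^ 2 * r ^ 2 - 2 * q ^ 4 * r ^ 2 * x i ^ 2 :=
        fun i => by ring
      simp_rw [this, Finset.sum_sub_distrib, Finset.sum_add_distrib, ← Finset.mul_sum]
      simp only [Finset.sum_const, Finset.card_univ, Fintype.card_fin, nsmul_eq_mul]
      rw [← hS, ← hN]; ring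
    simp only
    rw [e1]
    have hd' : (3 : ℝ) ≤ d := by exact_mod_cast hd
    have e2 : q ^ 2 * r ^ 2 ≤ (d * q ^ 2 - 2 * q ^ 4 * N) * r ^ 2 := by
      refine mul_le_mul_of_nonneg_right ?_ (sq_nonneg r)
      have : q ^ 4 * N = q ^ 2 * (1 - q ^ 2) := by rw [← hqs]; ring
      nlinarith [sq_nonneg q, sq_nonneg (q ^ 2)]
    have e3 : |2 * r * q ^ 2 * S| ≤ 1 / 2 * (q ^ 2 * r ^ 2) + 2 * W := by
      refine abs_le_of_sq_le_sq ?_ (by positivity)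
      have h1 : (q ^ 2 * S) ^ 2 ≤ q ^ 2 * W := by
        calc (q ^ 2 * S) ^ 2 = q ^ 2 * (q ^ 2 * S ^ 2) := by ring
          _ ≤ q ^ 2 * (q ^ 2 * (N * W)) := by gcongr
          _ = q ^ 2 * ((1 - q ^ 2) * W) := by rw [← hqs]; ring
          _ ≤ q ^ 2 * W := by
            refine mul_le_mul_of_nonneg_left ?_ (sq_nonneg q)
            nlinarith [mul_nonneg (sq_nonneg q) hW0]
      calc (2 * r * q ^ 2 * S) ^ 2 = 4 * r ^ 2 * (q ^ 2 * S) ^ 2 := by ring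
        _ ≤ 4 * r ^ 2 * (q ^ 2 * W) := by gcongr
        _ ≤ (1 / 2 * (q ^ 2 * r ^ 2) + 2 * W) ^ 2 := by
          nlinarith [sq_nonneg (1 / 2 * (q ^ 2 * r ^ 2) - 2 * W)]
    linarith [(abs_le.1 e3).1]
  rw [hsum, integral_sub (hqH.const_mul _) (hwi.const_mul _), integral_const_mul,
    integral_const_mul] at hmono
  linarith

/-- A Hardy inequality. -/
lemma integral_invBracket_sq_mul_sq_le (hd : 3 ≤ d) {p : ℝ} (hp : 1 < p)
    {f : EuclideanSpace ℝ (Fin d) → ℝ} {w : Fin d → EuclideanSpace ℝ (Fin d) → ℝ}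
    (hf : Continuous f) (hw : ∀ i, Continuous (w i))
    (hfw : ∀ i x, HasLineDerivAt ℝ f (w i x) x (basisVec i))
    (hfp : Integrable fun x => |f x| ^ (p + 1)) (hwi : Integrable fun x => ∑ i, w i x ^ 2) :
    Integrable (fun x => invBracket x ^ 2 * f x ^ 2) ∧
      ∫ x, invBracket x ^ 2 * f x ^ 2 ≤ 4 * ∫ x, ∑ i, w i x ^ 2 := by
  have key : ∫⁻ x, ENNReal.ofReal (invBracket x ^ 2 * f x ^ 2) ≤
      ENNReal.ofReal (4 * ∫ x, ∑ i, w i x ^ 2) := by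
    have hlim : ∀ x, Tendsto (fun n : ℕ =>
        ENNReal.ofReal (invBracket x ^ 2 * softThreshold (1 / ((n : ℝ) + 1)) (f x) ^ 2)) atTop
        (nhds (ENNReal.ofReal (invBracket x ^ 2 * f x ^ 2))) := by
      intro x
      have h0 : Tendsto (fun n : ℕ => softThreshold (1 / ((n : ℝ) + 1)) (f x)) atTop
          (nhds (f x)) := by
        rw [tendsto_iff_norm_sub_tendsto_zero]
        exact squeeze_zero (fun _ => norm_nonneg _)
          (fun n => abs_softThreshold_sub_le (by positivity) _)
          tendsto_one_div_add_atTop_nhds_zero_nat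
      exact ENNReal.tendsto_ofReal ((h0.pow 2).const_mul _)
    calc ∫⁻ x, ENNReal.ofReal (invBracket x ^ 2 * f x ^ 2)
        = ∫⁻ x, liminf (fun n : ℕ => ENNReal.ofReal
            (invBracket x ^ 2 * softThreshold (1 / ((n : ℝ) + 1)) (f x) ^ 2)) atTop :=
          lintegral_congr fun x => (hlim x).liminf_eq.symm
      _ ≤ liminf (fun n : ℕ => ∫⁻ x, ENNReal.ofReal
            (invBracket x ^ 2 * softThreshold (1 / ((n : ℝ) + 1)) (f x) ^ 2)) atTop :=
          lintegral_liminf_le fun n => ENNReal.measurable_ofReal.comp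
            (Continuous.measurable (by fun_prop))
      _ ≤ ENNReal.ofReal (4 * ∫ x, ∑ i, w i x ^ 2) := by
          refine liminf_le_of_le (by isBoundedDefault) fun b hb => ?_
          obtain ⟨n, hn⟩ := hb.exists
          have h := integral_invBracket_sq_mul_softThreshold_sq_le hd hp
            (by positivity : (0 : ℝ) < 1 / ((n : ℝ) + 1)) hf hw hfw hfp hwi
          refine hn.trans ?_
          rw [← ofReal_integral_eq_lintegral_ofReal h.1 (ae_of_all _ fun x => by positivity)]
          exact ENNReal.ofReal_le_ofReal h.2
  have hint : Integrable fun x => invBracket x ^ 2 * f x ^ 2 := by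
    refine ⟨by fun_prop, ?_⟩
    rw [hasFiniteIntegral_iff_ofReal (ae_of_all _ fun x => by positivity)]
    exact key.trans_lt ENNReal.ofReal_lt_top
  refine ⟨hint, ?_⟩
  rw [← ofReal_integral_eq_lintegral_ofReal hint (ae_of_all _ fun x => by positivity)] at key
  refine (ENNReal.ofReal_le_ofReal_iff ?_).1 key
  exact mul_nonneg (by norm_num) (integral_nonneg fun x => Finset.sum_nonneg fun i _ => sq_nonneg _)

/-! ### Cutoffs and differentiation of localized integrals -/

lemma exists_cutoff (d : ℕ) : ∃ C : ℝ, 0 ≤ C ∧ ∀ L : ℝ, 0 < L →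
    ∃ (χ : EuclideanSpace ℝ (Fin d) → ℝ) (χ' : Fin d → EuclideanSpace ℝ (Fin d) → ℝ),
      Continuous χ ∧ HasCompactSupport χ ∧ (∀ i, Continuous (χ' i)) ∧
      (∀ i, HasCompactSupport (χ' i)) ∧ (∀ x, 0 ≤ χ x) ∧ (∀ x, χ x ≤ 1) ∧
      (∀ x, ‖x‖ ≤ L → χ x = 1) ∧ (∀ i x, HasLineDerivAt ℝ χ (χ' i x) x (basisVec i)) ∧
      ∀ i x, |χ' i x| ≤ C / L := by
  let f : ContDiffBump (0 : EuclideanSpace ℝ (Fin d)) := ⟨1, 2, one_pos, one_lt_two⟩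
  have hf : ContDiff ℝ 1 f := f.contDiff
  have hf' : Continuous (fderiv ℝ f) := hf.continuous_fderiv one_ne_zero
  have hfs : HasCompactSupport (fderiv ℝ f) := f.hasCompactSupport.fderiv ℝ
  obtain ⟨C, hC⟩ := hfs.exists_bound_of_continuous hf'
  have hC0 : 0 ≤ C := (norm_nonneg _).trans (hC 0)
  refine ⟨C, hC0, fun L hL => ?_⟩
  have hL' : L⁻¹ ≠ 0 := inv_ne_zero hL.ne'
  refine ⟨fun x => f (L⁻¹ • x), fun i x => L⁻¹ * fderiv ℝ f (L⁻¹ • x) (basisVec i),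
    by fun_prop, f.hasCompactSupport.comp_smul hL', fun i => by fun_prop, fun i => ?_,
    fun x => f.nonneg, fun x => f.le_one, fun x hx => ?_, fun i x => ?_, fun i x => ?_⟩
  · refine (hfs.comp_smul hL').mono' fun x hx => subset_tsupport _ ?_
    rw [Function.mem_support] at hx ⊢
    intro h
    exact hx (by simp only [h]; simp)
  · refine f.one_of_mem_closedBall ?_
    rw [mem_closedBall_zero_iff, norm_smul, norm_inv, Real.norm_of_nonneg hL.le]
    exact inv_mul_le_one_of_le₀ hx hL.le
  · have h1 : HasFDerivAt f (fderiv ℝ f (L⁻¹ • x)) (L⁻¹ • x) :=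
      (hf.differentiable one_ne_zero _).hasFDerivAt
    have h2 : HasFDerivAt (fun y : EuclideanSpace ℝ (Fin d) => L⁻¹ • y)
        (L⁻¹ • ContinuousLinearMap.id ℝ (EuclideanSpace ℝ (Fin d))) x :=
      (hasFDerivAt_id x).const_smul L⁻¹
    refine hasLineDerivAt_congr_deriv ((h1.comp x h2).hasLineDerivAt (basisVec i)) ?_
    simp
  · rw [abs_mul, abs_of_pos (inv_pos.2 hL), div_eq_inv_mul]
    refine mul_le_mul_of_nonneg_left ?_ (inv_pos.2 hL).le
    have h := (fderiv ℝ f (L⁻¹ • x)).le_opNorm (basisVec i)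
    have hb : ‖basisVec i‖ = 1 := by simp [basisVec]
    rw [hb, mul_one] at h
    exact h.trans (hC _)

lemma continuous_localized_integral {χ : EuclideanSpace ℝ (Fin d) → ℝ} (hχ : Continuous χ)
    (hχs : HasCompactSupport χ) {G : EuclideanSpace ℝ (Fin d) → ℝ → ℝ}
    (hG : Continuous (Function.uncurry G)) : Continuous fun t => ∫ x, χ x * G x t := by
  have h : ∀ t, ∫ x, χ x * G x t = ∫ x in tsupport χ, χ x * G x t := fun t =>
    (setIntegral_eq_integral_of_forall_compl_eq_zero fun x hx => by
      rw [image_eq_zero_of_notMem_tsupport hx, zero_mul]).symm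
  simp_rw [h]
  refine continuous_parametric_integral_of_continuous (f := fun t x => χ x * G x t) ?_ hχs
  have : Continuous fun z : ℝ × EuclideanSpace ℝ (Fin d) => G z.2 z.1 :=
    hG.comp (continuous_snd.prodMk continuous_fst)
  exact (hχ.comp continuous_snd).mul this

lemma integrable_cutoff_mul {χ f : EuclideanSpace ℝ (Fin d) → ℝ} (hχ : Continuous χ)
    (hχs : HasCompactSupport χ) (hf : Continuous f) : Integrable fun x => χ x * f x :=
  (hχ.mul hf).integrable_of_hasCompactSupport hχs.mul_right

lemma localized_integral_sub_eq {χ : EuclideanSpace ℝ (Fin d) → ℝ} (hχ : Continuous χ)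
    (hχs : HasCompactSupport χ) {G G' : EuclideanSpace ℝ (Fin d) → ℝ → ℝ}
    (hG : ∀ t, Continuous fun x => G x t)
    (hG' : Continuous (Function.uncurry G')) (h : ∀ x t, HasDerivAt (G x) (G' x t) t)
    (s t : ℝ) :
    (∫ x, χ x * G x t) - ∫ x, χ x * G x s = ∫ r in s..t, ∫ x, χ x * G' x r := by
  have hG'' : Continuous fun z : ℝ × EuclideanSpace ℝ (Fin d) => χ z.2 * G' z.2 z.1 :=
    (hχ.comp continuous_snd).mul (hG'.comp (continuous_snd.prodMk continuous_fst))
  have hset : ∀ r, ∫ x, χ x * G' x r = ∫ x in tsupport χ, χ x * G' x r := fun r =>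
    (setIntegral_eq_integral_of_forall_compl_eq_zero fun x hx => by
      rw [image_eq_zero_of_notMem_tsupport hx, zero_mul]).symm
  have hslice : ∀ x, Continuous (G' x) := fun x => hG'.comp (continuous_const.prodMk continuous_id)
  rw [← integral_sub (integrable_cutoff_mul hχ hχs (hG t)) (integrable_cutoff_mul hχ hχs (hG s))]
  simp_rw [hset]
  rw [intervalIntegral_integral_swap (f := fun r x => χ x * G' x r)]
  · rw [setIntegral_eq_integral_of_forall_compl_eq_zero fun x hx => by
      simp [image_eq_zero_of_notMem_tsupport hx]]
    congr 1
    funext x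
    rw [intervalIntegral.integral_const_mul,
      intervalIntegral.integral_eq_sub_of_hasDerivAt (fun r _ => h x r)
        ((hslice x).intervalIntegrable _ _)]
    ring
  · rw [Measure.prod_restrict]
    exact (hG''.continuousOn.integrableOn_compact (isCompact_uIcc.prod hχs)).mono_set
      (Set.prod_mono Set.uIoc_subset_uIcc subset_rfl)

/-! ### The Morawetz identity -/

/-- A solution of the defocusing wave equation, presented together with its derivatives of order at
most two: `v = ∂ₜu`, `a = ∂ₜ²u`, `w i = ∂ᵢu`, `b i = ∂ᵢ∂ₜu` and `c i j = ∂ᵢ∂ⱼu`. -/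
structure WaveJet (p : ℝ) (u v a : EuclideanSpace ℝ (Fin d) → ℝ → ℝ)
    (w b : Fin d → EuclideanSpace ℝ (Fin d) → ℝ → ℝ)
    (c : Fin d → Fin d → EuclideanSpace ℝ (Fin d) → ℝ → ℝ) : Prop where
  cont_u : Continuous (Function.uncurry u)
  cont_v : Continuous (Function.uncurry v)
  cont_a : Continuous (Function.uncurry a)
  cont_w : ∀ i, Continuous (Function.uncurry (w i))
  cont_b : ∀ i, Continuous (Function.uncurry (b i))
  cont_c : ∀ i j, Continuous (Function.uncurry (c i j))
  deriv_u : ∀ x t, HasDerivAt (u x) (v x t) t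
  deriv_v : ∀ x t, HasDerivAt (v x) (a x t) t
  deriv_w : ∀ i x t, HasDerivAt (w i x) (b i x t) t
  lineDeriv_u : ∀ i x t, HasLineDerivAt ℝ (fun y => u y t) (w i x t) x (basisVec i)
  lineDeriv_v : ∀ i x t, HasLineDerivAt ℝ (fun y => v y t) (b i x t) x (basisVec i)
  lineDeriv_w : ∀ i j x t, HasLineDerivAt ℝ (fun y => w j y t) (c i j x t) x (basisVec i)
  symm : ∀ i j x t, c i j x t = c j i x t
  wave : ∀ x t, a x t = ∑ i, c i i x t - |u x t| ^ (p - 1) * u x t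

/-- The weight multiplying `u` in the Morawetz multiplier. -/
noncomputable def zeroOrderWeight (p : ℝ) (x : EuclideanSpace ℝ (Fin d)) : ℝ :=
  ((d : ℝ) - 1) / 2 * invBracket x + 1 / (p + 1) * invBracket x ^ 3

/-- The radial part of the gradient of `zeroOrderWeight`, up to sign. -/
noncomputable def weightSlope (p : ℝ) (x : EuclideanSpace ℝ (Fin d)) : ℝ :=
  ((d : ℝ) - 1) / 2 * invBracket x ^ 3 + 3 * (1 / (p + 1)) * invBracket x ^ 5

/-- The radial part of the gradient of `weightSlope`, up to sign. -/
noncomputable def weightCurvature (p : ℝ) (x : EuclideanSpace ℝ (Fin d)) : ℝ :=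
  3 * (((d : ℝ) - 1) / 2) * invBracket x ^ 5 + 15 * (1 / (p + 1)) * invBracket x ^ 7

@[fun_prop]
lemma continuous_zeroOrderWeight (p : ℝ) :
    Continuous (zeroOrderWeight p : EuclideanSpace ℝ (Fin d) → ℝ) := by
  unfold zeroOrderWeight; fun_prop

@[fun_prop]
lemma continuous_weightSlope (p : ℝ) :
    Continuous (weightSlope p : EuclideanSpace ℝ (Fin d) → ℝ) := by
  unfold weightSlope; fun_prop

@[fun_prop]
lemma continuous_weightCurvature (p : ℝ) :
    Continuous (weightCurvature p : EuclideanSpace ℝ (Fin d) → ℝ) := by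
  unfold weightCurvature; fun_prop

lemma hasLineDerivAt_zeroOrderWeight (p : ℝ) (x : EuclideanSpace ℝ (Fin d)) (i : Fin d) :
    HasLineDerivAt ℝ (zeroOrderWeight p) (-(x i * weightSlope p x)) x (basisVec i) := by
  have hq := hasLineDerivAt_invBracket x i
  refine hasLineDerivAt_congr_deriv (hasLineDerivAt_add (hasLineDerivAt_const_mul _ hq)
    (hasLineDerivAt_const_mul _ (hasLineDerivAt_pow 3 hq))) ?_
  simp only [weightSlope]; push_cast; ring

lemma hasLineDerivAt_weightSlope (p : ℝ) (x : EuclideanSpace ℝ (Fin d)) (i : Fin d) :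
    HasLineDerivAt ℝ (weightSlope p) (-(x i * weightCurvature p x)) x (basisVec i) := by
  have hq := hasLineDerivAt_invBracket x i
  refine hasLineDerivAt_congr_deriv (hasLineDerivAt_add
    (hasLineDerivAt_const_mul _ (hasLineDerivAt_pow 3 hq))
    (hasLineDerivAt_const_mul _ (hasLineDerivAt_pow 5 hq))) ?_
  simp only [weightCurvature]; push_cast; ring

lemma hasLineDerivAt_coord_mul_invBracket (x : EuclideanSpace ℝ (Fin d)) (i j : Fin d) :
    HasLineDerivAt ℝ (fun y : EuclideanSpace ℝ (Fin d) => y j * invBracket y)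
      ((if i = j then 1 else 0) * invBracket x - x i * x j * invBracket x ^ 3) x
      (basisVec i) := by
  refine hasLineDerivAt_congr_deriv (hasLineDerivAt_mul (hasLineDerivAt_coord x i j)
    (hasLineDerivAt_invBracket x i)) ?_
  ring

section Morawetz

variable (p : ℝ) (u v a : EuclideanSpace ℝ (Fin d) → ℝ → ℝ)
    (w b : Fin d → EuclideanSpace ℝ (Fin d) → ℝ → ℝ)
    (c : Fin d → Fin d → EuclideanSpace ℝ (Fin d) → ℝ → ℝ)

/-- The Morawetz multiplier. -/
noncomputable def multiplier (x : EuclideanSpace ℝ (Fin d)) (t : ℝ) : ℝ :=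
  ∑ j, x j * invBracket x * w j x t + zeroOrderWeight p x * u x t

/-- The Lagrangian density of the wave equation. -/
noncomputable def lagrangian (x : EuclideanSpace ℝ (Fin d)) (t : ℝ) : ℝ :=
  v x t ^ 2 / 2 - (∑ j, w j x t ^ 2) / 2 - |u x t| ^ (p + 1) / (p + 1)

/-- The energy density of the wave equation. -/
noncomputable def energyDensity (x : EuclideanSpace ℝ (Fin d)) (t : ℝ) : ℝ :=
  (∑ j, w j x t ^ 2) / 2 + v x t ^ 2 / 2 + |u x t| ^ (p + 1) / (p + 1)

/-- The flux in the Morawetz identity. -/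
noncomputable def morawetzFlux (i : Fin d) (x : EuclideanSpace ℝ (Fin d)) (t : ℝ) : ℝ :=
  w i x t * multiplier p u w x t + x i * invBracket x * lagrangian p u v w x t +
    1 / 2 * (u x t ^ 2 * (x i * weightSlope p x))

/-- The dissipation density in the Morawetz identity. -/
noncomputable def morawetzDensity (x : EuclideanSpace ℝ (Fin d)) (t : ℝ) : ℝ :=
  invBracket x * ∑ j, w j x t ^ 2 - invBracket x ^ 3 * (∑ j, x j * w j x t) ^ 2 +
    (1 / 2 - 1 / (p + 1)) * invBracket x ^ 3 * (v x t ^ 2 - ∑ j, w j x t ^ 2) +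
    (p - 1) * (((d : ℝ) - 1) / 2) * invBracket x * (|u x t| ^ (p + 1) / (p + 1)) +
    1 / 2 * u x t ^ 2 *
      (d * weightSlope p x - (∑ j, x j ^ 2) * weightCurvature p x)

/-- The time derivative of the density `∂ₜu` times the multiplier. -/
noncomputable def morawetzRate (x : EuclideanSpace ℝ (Fin d)) (t : ℝ) : ℝ :=
  a x t * multiplier p u w x t +
    v x t * (∑ j, x j * invBracket x * b j x t + zeroOrderWeight p x * v x t)

/-- The derivative of the `i`-th component of the flux in the `i`-th direction. -/
noncomputable def morawetzFluxDeriv (i : Fin d) (x : EuclideanSpace ℝ (Fin d)) (t : ℝ) : ℝ :=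
  c i i x t * multiplier p u w x t +
    w i x t * (∑ j, (((if i = j then 1 else 0) * invBracket x - x i * x j * invBracket x ^ 3) *
      w j x t + x j * invBracket x * c i j x t) +
      (-(x i * weightSlope p x) * u x t + zeroOrderWeight p x * w i x t)) +
    ((invBracket x - x i * x i * invBracket x ^ 3) * lagrangian p u v w x t +
      x i * invBracket x * (v x t * b i x t - ∑ j, w j x t * c i j x t -
        |u x t| ^ (p - 1) * u x t * w i x t)) +
    (u x t * w i x t * (x i * weightSlope p x) +
      1 / 2 * u x t ^ 2 * (weightSlope p x - x i * x i * weightCurvature p x))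

end Morawetz

section MorawetzLemmas

variable {p : ℝ} {u v a : EuclideanSpace ℝ (Fin d) → ℝ → ℝ}
    {w b : Fin d → EuclideanSpace ℝ (Fin d) → ℝ → ℝ}
    {c : Fin d → Fin d → EuclideanSpace ℝ (Fin d) → ℝ → ℝ}

lemma hasDerivAt_potential (hp : 1 < p) (s : ℝ) :
    HasDerivAt (fun r : ℝ => |r| ^ (p + 1) / (p + 1)) (|s| ^ (p - 1) * s) s := by
  refine ((hasDerivAt_abs_rpow s (by linarith : 1 < p + 1)).div_const (p + 1)).congr_deriv ?_
  have h : p + 1 ≠ 0 := by linarith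
  rw [show p + 1 - 2 = p - 1 by ring]
  field_simp

lemma WaveJet.hasLineDerivAt_flux (hp : 1 < p) (h : WaveJet p u v a w b c) (i : Fin d)
    (x : EuclideanSpace ℝ (Fin d)) (t : ℝ) :
    HasLineDerivAt ℝ (fun y => morawetzFlux p u v w i y t) (morawetzFluxDeriv p u v w b c i x t) x
      (basisVec i) := by
  have hY : HasLineDerivAt ℝ (fun y => multiplier p u w y t) _ x (basisVec i) :=
    hasLineDerivAt_add
      (hasLineDerivAt_sum (s := Finset.univ) fun j _ => hasLineDerivAt_mul
        (hasLineDerivAt_coord_mul_invBracket x i j) (h.lineDeriv_w i j x t))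
      (hasLineDerivAt_mul (hasLineDerivAt_zeroOrderWeight p x i) (h.lineDeriv_u i x t))
  have hLag : HasLineDerivAt ℝ (fun y => lagrangian p u v w y t)
      (v x t * b i x t - ∑ j, w j x t * c i j x t -
        |u x t| ^ (p - 1) * u x t * w i x t) x (basisVec i) := by
    have h1 := hasLineDerivAt_const_mul (1 / 2) (hasLineDerivAt_pow 2 (h.lineDeriv_v i x t))
    have h2 := hasLineDerivAt_const_mul (1 / 2) (hasLineDerivAt_sum (s := Finset.univ)
      fun j _ => hasLineDerivAt_pow 2 (h.lineDeriv_w i j x t))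
    have h3 := hasLineDerivAt_comp (f := fun y => u y t) (hasDerivAt_potential hp (u x t))
      (h.lineDeriv_u i x t)
    have h4 := hasLineDerivAt_sub (hasLineDerivAt_sub h1 h2) h3
    have hfun : (fun y => lagrangian p u v w y t) = fun y =>
        1 / 2 * v y t ^ 2 - 1 / 2 * ∑ j, w j y t ^ 2 - |u y t| ^ (p + 1) / (p + 1) := by
      funext y; unfold lagrangian; ring
    rw [hfun]
    refine hasLineDerivAt_congr_deriv h4 ?_
    rw [Finset.mul_sum]
    congr 2
    · push_cast; ring
    · refine Finset.sum_congr rfl fun j _ => ?_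
      push_cast; ring
  have hslope := hasLineDerivAt_mul (hasLineDerivAt_coord x i i) (hasLineDerivAt_weightSlope p x i)
  refine hasLineDerivAt_congr_deriv (hasLineDerivAt_add (hasLineDerivAt_add
    (hasLineDerivAt_mul (h.lineDeriv_w i i x t) hY)
    (hasLineDerivAt_mul (hasLineDerivAt_coord_mul_invBracket x i i) hLag))
    (hasLineDerivAt_const_mul (1 / 2)
      (hasLineDerivAt_mul (hasLineDerivAt_pow 2 (h.lineDeriv_u i x t)) hslope))) ?_
  simp only [morawetzFluxDeriv, if_true]
  push_cast
  ring

lemma WaveJet.hasDerivAt_morawetz (h : WaveJet p u v a w b c)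
    (x : EuclideanSpace ℝ (Fin d)) (t : ℝ) :
    HasDerivAt (fun s => v x s * multiplier p u w x s) (morawetzRate p u v a w b x t) t := by
  have hY : HasDerivAt (fun s => multiplier p u w x s)
      (∑ j, x j * invBracket x * b j x t + zeroOrderWeight p x * v x t) t :=
    (HasDerivAt.fun_sum fun j _ => (h.deriv_w j x t).const_mul _).add
      ((h.deriv_u x t).const_mul _)
  exact (h.deriv_v x t).fun_mul hY

lemma WaveJet.morawetzRate_eq (hp : 1 < p) (h : WaveJet p u v a w b c)
    (x : EuclideanSpace ℝ (Fin d)) (t : ℝ) :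
    morawetzRate p u v a w b x t =
      ∑ i, morawetzFluxDeriv p u v w b c i x t - morawetzDensity p u v w x t := by
  have hp1 : p + 1 ≠ 0 := by linarith
  have hV : |u x t| ^ (p - 1) * u x t * u x t = (p + 1) * (|u x t| ^ (p + 1) / (p + 1)) := by
    have h2 : |u x t| ^ (p + 1) = |u x t| ^ (p - 1) * |u x t| ^ 2 := by
      rw [← Real.rpow_natCast, ← Real.rpow_add_of_nonneg (abs_nonneg _) (by linarith) (by simp)]
      congr 1; push_cast; ring
    rw [h2, sq_abs]; field_simp
  have hqN := invBracket_sq_mul_sum x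
  have hswap : ∑ i, x i * ∑ j, w j x t * c i j x t = ∑ i, w i x t * ∑ j, x j * c i j x t := by
    simp_rw [Finset.mul_sum]
    rw [Finset.sum_comm]
    refine Finset.sum_congr rfl fun i _ => Finset.sum_congr rfl fun j _ => ?_
    rw [h.symm j i]; ring
  have hin : ∀ i, ∑ j, (((if i = j then (1 : ℝ) else 0) * invBracket x -
      x i * x j * invBracket x ^ 3) * w j x t + x j * invBracket x * c i j x t) =
      invBracket x * w i x t - x i * invBracket x ^ 3 * (∑ j, x j * w j x t) +
        invBracket x * ∑ j, x j * c i j x t := by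
    intro i
    simp only [Finset.sum_add_distrib, sub_mul, Finset.sum_sub_distrib, Finset.mul_sum, ite_mul,
      one_mul, zero_mul, Finset.sum_ite_eq, Finset.mem_univ, if_true]
    congr 1
    · congr 1
      exact Finset.sum_congr rfl fun j _ => by ring
    · exact Finset.sum_congr rfl fun j _ => by ring
  have hm : multiplier p u w x t =
      invBracket x * ∑ j, x j * w j x t + zeroOrderWeight p x * u x t := by
    unfold multiplier
    rw [Finset.mul_sum]
    congr 1
    exact Finset.sum_congr rfl fun j _ => by ring
  have hb : ∑ j, x j * invBracket x * b j x t = invBracket x * ∑ j, x j * b j x t := by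
    rw [Finset.mul_sum]
    exact Finset.sum_congr rfl fun j _ => by ring
  unfold morawetzRate morawetzFluxDeriv morawetzDensity
  simp_rw [hin]
  rw [hb, h.wave x t]
  set q := invBracket x
  set Y := multiplier p u w x t
  set ℓ := lagrangian p u v w x t with hℓ
  set S := ∑ j, x j * w j x t with hS
  set g := zeroOrderWeight p x with hg
  set k := weightSlope p x
  set κ := weightCurvature p x
  set N := |u x t| ^ (p - 1) * u x t
  have hsum : ∑ i, (c i i x t * Y + w i x t * (q * w i x t - x i * q ^ 3 * S +
        q * ∑ j, x j * c i j x t + (-(x i * k) * u x t + g * w i x t)) +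
      ((q - x i * x i * q ^ 3) * ℓ + x i * q * (v x t * b i x t - ∑ j, w j x t * c i j x t -
        N * w i x t)) +
      (u x t * w i x t * (x i * k) + 1 / 2 * u x t ^ 2 * (k - x i * x i * κ))) =
      Y * (∑ i, c i i x t) + (q + g) * (∑ i, w i x t ^ 2) - q ^ 3 * S * S +
      q * (∑ i, w i x t * ∑ j, x j * c i j x t) + (d * q - q ^ 3 * ∑ i, x i ^ 2) * ℓ +
      q * v x t * (∑ i, x i * b i x t) - q * (∑ i, x i * ∑ j, w j x t * c i j x t) -
      q * N * S + 1 / 2 * u x t ^ 2 * (d * k - (∑ i, x i ^ 2) * κ) := by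
    have hi : ∀ i, c i i x t * Y + w i x t * (q * w i x t - x i * q ^ 3 * S +
        q * ∑ j, x j * c i j x t + (-(x i * k) * u x t + g * w i x t)) +
      ((q - x i * x i * q ^ 3) * ℓ + x i * q * (v x t * b i x t - ∑ j, w j x t * c i j x t -
        N * w i x t)) +
      (u x t * w i x t * (x i * k) + 1 / 2 * u x t ^ 2 * (k - x i * x i * κ)) =
      Y * c i i x t + (q + g) * w i x t ^ 2 - q ^ 3 * S * (x i * w i x t) +
      q * (w i x t * ∑ j, x j * c i j x t) + (q * ℓ - q ^ 3 * ℓ * x i ^ 2) +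
      q * v x t * (x i * b i x t) - q * (x i * ∑ j, w j x t * c i j x t) -
      q * N * (x i * w i x t) +
      (1 / 2 * u x t ^ 2 * k - 1 / 2 * u x t ^ 2 * κ * x i ^ 2) := fun i => by ring
    rw [Finset.sum_congr rfl fun i _ => hi i]
    simp only [Finset.sum_add_distrib, Finset.sum_sub_distrib, ← Finset.mul_sum,
      Finset.sum_const, Finset.card_univ, Fintype.card_fin, nsmul_eq_mul]
    rw [← hS]
    ring
  rw [hsum, hswap, hm]
  have hq3 : q ^ 3 * ∑ i, x i ^ 2 = q * (1 - q ^ 2) := by rw [← hqN]; ring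
  rw [hq3]
  simp only [lagrangian] at hℓ
  have hβ : (p + 1) * (1 / (p + 1)) = 1 := by field_simp
  simp only [zeroOrderWeight] at hg
  set V := |u x t| ^ (p + 1) / (p + 1)
  set β := 1 / (p + 1)
  rw [hℓ, hg]
  linear_combination (-(((d : ℝ) - 1) / 2 * q + β * q ^ 3)) * hV + (- q ^ 3 * V) * hβ

end MorawetzLemmas

/-! ### Integrability of the local energy -/

section LocalEnergy

variable {p : ℝ} {u v a : EuclideanSpace ℝ (Fin d) → ℝ → ℝ}
    {w b : Fin d → EuclideanSpace ℝ (Fin d) → ℝ → ℝ}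
    {c : Fin d → Fin d → EuclideanSpace ℝ (Fin d) → ℝ → ℝ}

lemma energyDensity_nonneg (hp : 1 < p) (x : EuclideanSpace ℝ (Fin d)) (t : ℝ) :
    0 ≤ energyDensity p u v w x t := by
  have : 0 < p + 1 := by linarith
  unfold energyDensity; positivity

lemma le_morawetzDensity (hd : 3 ≤ d) (hp : 1 < p) (x : EuclideanSpace ℝ (Fin d)) (t : ℝ) :
    (p - 1) / (p + 1) * (invBracket x ^ 3 * energyDensity p u v w x t) ≤
      morawetzDensity p u v w x t := by
  have hd' : (3 : ℝ) ≤ d := by exact_mod_cast hd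
  have hp1 : 0 < p + 1 := by linarith
  have hqN := invBracket_sq_mul_sum x
  have hq0 := invBracket_pos x
  have hq1 := invBracket_le_one x
  have hCS : (∑ i, x i * w i x t) ^ 2 ≤ (∑ i, x i ^ 2) * ∑ i, w i x t ^ 2 :=
    Finset.sum_mul_sq_le_sq_mul_sq _ _ _
  have hV0 : 0 ≤ |u x t| ^ (p + 1) / (p + 1) := by positivity
  have hW0 : 0 ≤ ∑ i, w i x t ^ 2 := by positivity
  unfold energyDensity morawetzDensity weightSlope weightCurvature
  have hβ0 : 0 < 1 / (p + 1) := by positivity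
  have hβ2 : 1 / (p + 1) ≤ 1 / 2 := by gcongr; linarith
  have hδ : (p - 1) / (p + 1) = 1 - 2 * (1 / (p + 1)) := by field_simp; ring
  have hδp : (p - 1) / (p + 1) ≤ p - 1 := div_le_self (by linarith) (by linarith)
  rw [hδ] at hδp ⊢
  set q := invBracket x
  set S := ∑ j, x j * w j x t
  set W := ∑ j, w j x t ^ 2
  set N := ∑ j, x j ^ 2
  set V := |u x t| ^ (p + 1) / (p + 1)
  set β := 1 / (p + 1)
  have hq3 : 0 < q ^ 3 := by positivity
  have e1 : q ^ 3 * W ≤ q * W - q ^ 3 * S ^ 2 := by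
    have h1 : q ^ 3 * S ^ 2 ≤ q ^ 3 * (N * W) := by gcongr
    have h2 : q ^ 3 * (N * W) = q * (1 - q ^ 2) * W := by rw [← hqN]; ring
    nlinarith
  have e2 : (1 - 2 * β) * (q ^ 3 * V) ≤ (p - 1) * (((d : ℝ) - 1) / 2) * q * V := by
    have h1 : q ^ 3 ≤ q := by
      calc q ^ 3 = q * q ^ 2 := by ring
        _ ≤ q * 1 := by gcongr; exact pow_le_one₀ hq0.le hq1
        _ = q := mul_one q
    calc (1 - 2 * β) * (q ^ 3 * V) ≤ (p - 1) * (q * V) := by gcongr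
      _ = (p - 1) * 1 * q * V := by ring
      _ ≤ (p - 1) * (((d : ℝ) - 1) / 2) * q * V := by gcongr; linarith
  have e3 : 0 ≤ d * (((d : ℝ) - 1) / 2 * q ^ 3 + 3 * β * q ^ 5) -
      N * (3 * (((d : ℝ) - 1) / 2) * q ^ 5 + 15 * β * q ^ 7) := by
    have h1 : N * (3 * (((d : ℝ) - 1) / 2) * q ^ 5 + 15 * β * q ^ 7) =
        (1 - q ^ 2) * (3 * (((d : ℝ) - 1) / 2) * q ^ 3 + 15 * β * q ^ 5) := by
      rw [← hqN]; ring
    have h2 : d * (((d : ℝ) - 1) / 2 * q ^ 3 + 3 * β * q ^ 5) -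
        (1 - q ^ 2) * (3 * (((d : ℝ) - 1) / 2) * q ^ 3 + 15 * β * q ^ 5) =
        ((d : ℝ) - 1) / 2 * (d - 3) * q ^ 3 +
        (3 * (d - 3) * (1 / 2 + β) + 3 * (1 - 2 * β)) * q ^ 5 + 15 * β * q ^ 7 := by ring
    rw [h1, h2]
    have h3 : (0 : ℝ) ≤ d - 3 := by linarith
    have h4 : (0 : ℝ) ≤ (d : ℝ) - 1 := by linarith
    have h5 : 0 ≤ 1 - 2 * β := by linarith
    positivity
  have e4 : 0 ≤ 1 / 2 * u x t ^ 2 * (d * (((d : ℝ) - 1) / 2 * q ^ 3 + 3 * β * q ^ 5) -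
      N * (3 * (((d : ℝ) - 1) / 2) * q ^ 5 + 15 * β * q ^ 7)) := mul_nonneg (by positivity) e3
  have e5 : 0 ≤ β * (q ^ 3 * W) := by positivity
  have e6 : (1 - 2 * β) * (q ^ 3 * (W / 2 + v x t ^ 2 / 2 + V)) =
      (1 / 2 - β) * q ^ 3 * W + (1 / 2 - β) * q ^ 3 * v x t ^ 2 + (1 - 2 * β) * (q ^ 3 * V) := by
    ring
  nlinarith [mul_nonneg hq3.le hW0]

lemma multiplier_sq_le (hd : 3 ≤ d) (hp : 1 < p) (x : EuclideanSpace ℝ (Fin d)) (t : ℝ) :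
    multiplier p u w x t ^ 2 ≤
      2 * ∑ j, w j x t ^ 2 + 2 * (d : ℝ) ^ 2 * (invBracket x ^ 2 * u x t ^ 2) := by
  have hd' : (3 : ℝ) ≤ d := by exact_mod_cast hd
  have hqN := invBracket_sq_mul_sum x
  have hq0 := invBracket_pos x
  have hq1 := invBracket_le_one x
  have hCS : (∑ i, x i * invBracket x * w i x t) ^ 2 ≤
      (∑ i, (x i * invBracket x) ^ 2) * ∑ i, w i x t ^ 2 :=
    Finset.sum_mul_sq_le_sq_mul_sq _ _ _
  have hN : ∑ i, (x i * invBracket x) ^ 2 ≤ 1 := by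
    simp_rw [mul_pow]
    rw [← Finset.sum_mul, mul_comm, hqN]
    nlinarith
  have hW0 : 0 ≤ ∑ i, w i x t ^ 2 := by positivity
  have h1 : (∑ i, x i * invBracket x * w i x t) ^ 2 ≤ ∑ i, w i x t ^ 2 :=
    hCS.trans (mul_le_of_le_one_left hW0 hN)
  have hβ0 : 0 < 1 / (p + 1) := by
    have : 0 < p + 1 := by linarith
    positivity
  have hβ2 : 1 / (p + 1) ≤ 1 / 2 := by gcongr; linarith
  have hg0 : 0 ≤ zeroOrderWeight p x := by
    have : (0 : ℝ) ≤ (d : ℝ) - 1 := by linarith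
    unfold zeroOrderWeight; positivity
  have hg : zeroOrderWeight p x ≤ d * invBracket x := by
    unfold zeroOrderWeight
    have h3 : invBracket x ^ 3 ≤ invBracket x := by
      calc invBracket x ^ 3 = invBracket x * invBracket x ^ 2 := by ring
        _ ≤ invBracket x * 1 := by gcongr; exact pow_le_one₀ hq0.le hq1
        _ = invBracket x := mul_one _
    have h4 : 1 / (p + 1) * invBracket x ^ 3 ≤ 1 / 2 * invBracket x := by gcongr
    nlinarith
  have h2 : (zeroOrderWeight p x * u x t) ^ 2 ≤ (d : ℝ) ^ 2 * (invBracket x ^ 2 * u x t ^ 2) := by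
    calc (zeroOrderWeight p x * u x t) ^ 2 = zeroOrderWeight p x ^ 2 * u x t ^ 2 := by ring
      _ ≤ (d * invBracket x) ^ 2 * u x t ^ 2 := by gcongr
      _ = (d : ℝ) ^ 2 * (invBracket x ^ 2 * u x t ^ 2) := by ring
  unfold multiplier
  nlinarith [sq_nonneg ((∑ i, x i * invBracket x * w i x t) - zeroOrderWeight p x * u x t)]

lemma abs_mul_le_half_add (r s : ℝ) : |r * s| ≤ (r ^ 2 + s ^ 2) / 2 := by
  rw [abs_le]
  constructor <;> nlinarith [sq_nonneg (r + s), sq_nonneg (r - s)]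

lemma abs_mul_multiplier_le (hd : 3 ≤ d) (hp : 1 < p) (x : EuclideanSpace ℝ (Fin d)) (t : ℝ) :
    |v x t * multiplier p u w x t| ≤
      ((d : ℝ) + 3) ^ 2 * (energyDensity p u v w x t + invBracket x ^ 2 * u x t ^ 2) := by
  have h1 := abs_mul_le_half_add (v x t) (multiplier p u w x t)
  have h2 := multiplier_sq_le (u := u) (w := w) hd hp x t
  have hp1 : 0 < p + 1 := by linarith
  have hV0 : 0 ≤ |u x t| ^ (p + 1) / (p + 1) := by positivity
  have hW0 : 0 ≤ ∑ i, w i x t ^ 2 := by positivity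
  have hq0 : 0 ≤ invBracket x ^ 2 * u x t ^ 2 := by positivity
  have hd0 : (0 : ℝ) ≤ d := Nat.cast_nonneg d
  have he := energyDensity_nonneg (u := u) (v := v) (w := w) hp x t
  have h3 : v x t ^ 2 / 2 + ∑ i, w i x t ^ 2 ≤ 2 * energyDensity p u v w x t := by
    unfold energyDensity; nlinarith [sq_nonneg (v x t)]
  nlinarith [mul_nonneg hd0 he, mul_nonneg (mul_nonneg hd0 hd0) he, mul_nonneg hd0 hq0]

lemma abs_morawetzFlux_le (hd : 3 ≤ d) (hp : 1 < p) (i : Fin d) (x : EuclideanSpace ℝ (Fin d))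
    (t : ℝ) : |morawetzFlux p u v w i x t| ≤
      ((d : ℝ) + 3) ^ 2 * (energyDensity p u v w x t + invBracket x ^ 2 * u x t ^ 2) := by
  have h1 := abs_mul_le_half_add (w i x t) (multiplier p u w x t)
  have h2 := multiplier_sq_le (u := u) (w := w) hd hp x t
  have hp1 : 0 < p + 1 := by linarith
  have hd' : (3 : ℝ) ≤ d := by exact_mod_cast hd
  have hV0 : 0 ≤ |u x t| ^ (p + 1) / (p + 1) := by positivity
  have hW0 : 0 ≤ ∑ i, w i x t ^ 2 := by positivity
  have hq0 : 0 ≤ invBracket x ^ 2 * u x t ^ 2 := by positivity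
  have hd0 : (0 : ℝ) ≤ d := Nat.cast_nonneg d
  have hX := abs_coord_mul_invBracket_le x i
  have hwi : w i x t ^ 2 ≤ ∑ i, w i x t ^ 2 :=
    Finset.single_le_sum (f := fun i => w i x t ^ 2) (fun i _ => sq_nonneg _) (Finset.mem_univ i)
  have he := energyDensity_nonneg (u := u) (v := v) (w := w) hp x t
  have hWe : ∑ i, w i x t ^ 2 ≤ 2 * energyDensity p u v w x t := by
    unfold energyDensity; nlinarith [sq_nonneg (v x t)]
  have h3 : |x i * invBracket x * lagrangian p u v w x t| ≤ energyDensity p u v w x t := by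
    rw [abs_mul]
    refine (mul_le_of_le_one_left (abs_nonneg _) hX).trans ?_
    rw [abs_le]
    unfold lagrangian energyDensity
    constructor <;> nlinarith [sq_nonneg (v x t)]
  have h4 : |1 / 2 * (u x t ^ 2 * (x i * weightSlope p x))| ≤
      ((d : ℝ) + 1) * (invBracket x ^ 2 * u x t ^ 2) := by
    have hb0 := invBracket_pos x
    have hb1 := invBracket_le_one x
    have hβ0 : 0 < 1 / (p + 1) := by positivity
    have hβ2 : 1 / (p + 1) ≤ 1 / 2 := by gcongr; linarith
    have hsq : invBracket x ^ 2 ≤ 1 := pow_le_one₀ hb0.le hb1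
    have hα : 0 ≤ ((d : ℝ) - 1) / 2 := by linarith
    have hk : 0 ≤ ((d : ℝ) - 1) / 2 + 3 * (1 / (p + 1)) * invBracket x ^ 2 := by positivity
    have hk' : ((d : ℝ) - 1) / 2 + 3 * (1 / (p + 1)) * invBracket x ^ 2 ≤ d + 1 := by
      have : 3 * (1 / (p + 1)) * invBracket x ^ 2 ≤ 3 * (1 / 2) * 1 := by gcongr
      linarith
    have heq : 1 / 2 * (u x t ^ 2 * (x i * weightSlope p x)) =
        x i * invBracket x * (1 / 2 * (((d : ℝ) - 1) / 2 + 3 * (1 / (p + 1)) * invBracket x ^ 2) *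
          (invBracket x ^ 2 * u x t ^ 2)) := by
      unfold weightSlope; ring
    rw [heq, abs_mul]
    refine (mul_le_of_le_one_left (abs_nonneg _) hX).trans ?_
    rw [abs_of_nonneg (by positivity)]
    refine mul_le_mul_of_nonneg_right ?_ hq0
    linarith
  have h5 : |morawetzFlux p u v w i x t| ≤ |w i x t * multiplier p u w x t| +
      |x i * invBracket x * lagrangian p u v w x t| +
      |1 / 2 * (u x t ^ 2 * (x i * weightSlope p x))| := abs_add_three _ _ _
  nlinarith [mul_nonneg hd0 he, mul_nonneg (mul_nonneg hd0 hd0) he, mul_nonneg hd0 hq0]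

lemma WaveJet.continuous_multiplier (h : WaveJet p u v a w b c) :
    Continuous (Function.uncurry (multiplier p u w)) := by
  have h1 := h.cont_u
  have h2 := h.cont_w
  unfold multiplier
  simp only [Function.uncurry_def] at *
  fun_prop

lemma WaveJet.continuous_potential (hp : 1 < p) (h : WaveJet p u v a w b c) :
    Continuous fun z : EuclideanSpace ℝ (Fin d) × ℝ => |u z.1 z.2| ^ (p + 1) := by
  have h1 := h.cont_u
  simp only [Function.uncurry_def] at h1
  exact (continuous_abs.comp h1).rpow_const fun z => Or.inr (by linarith)

lemma WaveJet.continuous_energyDensity (hp : 1 < p) (h : WaveJet p u v a w b c) :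
    Continuous (Function.uncurry (energyDensity p u v w)) := by
  have h2 := h.cont_w
  have h3 := h.cont_v
  have h4 := h.continuous_potential hp
  unfold energyDensity
  simp only [Function.uncurry_def] at *
  fun_prop

lemma WaveJet.continuous_morawetzFlux (hp : 1 < p) (h : WaveJet p u v a w b c) (i : Fin d) :
    Continuous (Function.uncurry (morawetzFlux p u v w i)) := by
  have h1 := h.cont_u
  have h2 := h.cont_w
  have h3 := h.cont_v
  have h4 := h.continuous_potential hp
  have h5 := h.continuous_multiplier
  unfold morawetzFlux lagrangian
  simp only [Function.uncurry_def] at *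
  fun_prop

lemma WaveJet.continuous_morawetzDensity (hp : 1 < p) (h : WaveJet p u v a w b c) :
    Continuous (Function.uncurry (morawetzDensity p u v w)) := by
  have h1 := h.cont_u
  have h2 := h.cont_w
  have h3 := h.cont_v
  have h4 := h.continuous_potential hp
  unfold morawetzDensity
  simp only [Function.uncurry_def] at *
  fun_prop

lemma WaveJet.continuous_morawetzRate (h : WaveJet p u v a w b c) :
    Continuous (Function.uncurry (morawetzRate p u v a w b)) := by
  have h1 := h.cont_a
  have h2 := h.cont_b
  have h3 := h.cont_v
  have h5 := h.continuous_multiplier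
  unfold morawetzRate
  simp only [Function.uncurry_def] at *
  fun_prop

lemma WaveJet.continuous_morawetzFluxDeriv (hp : 1 < p) (h : WaveJet p u v a w b c) (i : Fin d) :
    Continuous (Function.uncurry (morawetzFluxDeriv p u v w b c i)) := by
  have h0 := h.cont_c
  have h1 := h.cont_u
  have h2 := h.cont_w
  have h3 := h.cont_v
  have h4 := h.continuous_potential hp
  have h5 := h.continuous_multiplier
  have h6 := h.cont_b
  have h7 : Continuous fun z : EuclideanSpace ℝ (Fin d) × ℝ => |u z.1 z.2| ^ (p - 1) := by
    simp only [Function.uncurry_def] at h1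
    exact (continuous_abs.comp h1).rpow_const fun z => Or.inr (by linarith)
  unfold morawetzFluxDeriv lagrangian
  simp only [Function.uncurry_def] at *
  fun_prop

lemma continuous_slice {G : EuclideanSpace ℝ (Fin d) → ℝ → ℝ}
    (hG : Continuous (Function.uncurry G)) (t : ℝ) : Continuous fun x => G x t :=
  hG.comp (continuous_id.prodMk continuous_const)

/-- The localized Morawetz identity, integrated in space. -/
lemma WaveJet.integral_cutoff_mul_rate (hp : 1 < p) (h : WaveJet p u v a w b c)
    {χ : EuclideanSpace ℝ (Fin d) → ℝ} {χ' : Fin d → EuclideanSpace ℝ (Fin d) → ℝ}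
    (hχ : Continuous χ) (hχs : HasCompactSupport χ) (hχ' : ∀ i, Continuous (χ' i))
    (hχs' : ∀ i, HasCompactSupport (χ' i))
    (hd : ∀ i x, HasLineDerivAt ℝ χ (χ' i x) x (basisVec i)) (t : ℝ) :
    ∫ x, χ x * morawetzRate p u v a w b x t =
      -(∑ i, ∫ x, χ' i x * morawetzFlux p u v w i x t) -
        ∫ x, χ x * morawetzDensity p u v w x t := by
  have hF := fun i => continuous_slice (h.continuous_morawetzFlux hp i) t
  have hF' := fun i => continuous_slice (h.continuous_morawetzFluxDeriv hp i) t
  have hD := continuous_slice (h.continuous_morawetzDensity hp) t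
  simp_rw [h.morawetzRate_eq hp, mul_sub, Finset.mul_sum]
  rw [integral_sub (integrable_finsetSum _ fun i _ => integrable_cutoff_mul hχ hχs (hF' i))
    (integrable_cutoff_mul hχ hχs hD),
    integral_finsetSum _ fun i _ => integrable_cutoff_mul hχ hχs (hF' i), ← Finset.sum_neg_distrib]
  congr 1
  refine Finset.sum_congr rfl fun i _ => ?_
  exact integral_mul_lineDeriv_eq_neg (integrable_cutoff_mul (hχ' i) (hχs' i) (hF i))
    (integrable_cutoff_mul hχ hχs (hF' i)) (integrable_cutoff_mul hχ hχs (hF i)) (hd i)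
    (fun x => h.hasLineDerivAt_flux hp i x t)

/-- The energy together with the Hardy term is bounded by a multiple of the energy. -/
lemma WaveJet.integral_energy_add_hardy_le (hd : 3 ≤ d) (hp : 1 < p) (h : WaveJet p u v a w b c)
    (t : ℝ) (he : Integrable fun x => energyDensity p u v w x t) :
    Integrable (fun x => energyDensity p u v w x t + invBracket x ^ 2 * u x t ^ 2) ∧
      ∫ x, (energyDensity p u v w x t + invBracket x ^ 2 * u x t ^ 2) ≤
        9 * ∫ x, energyDensity p u v w x t := by
  have hp1 : 0 < p + 1 := by linarith
  have hV0 : ∀ x, 0 ≤ |u x t| ^ (p + 1) / (p + 1) := fun x => by positivity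
  have hW0 : ∀ x, 0 ≤ ∑ i, w i x t ^ 2 := fun x => by positivity
  have hu := continuous_slice h.cont_u t
  have hw := fun i => continuous_slice (h.cont_w i) t
  have hV : Continuous fun x => |u x t| ^ (p + 1) :=
    (continuous_abs.comp hu).rpow_const fun z => Or.inr (by linarith)
  have hWe : ∀ x, ∑ i, w i x t ^ 2 ≤ 2 * energyDensity p u v w x t := fun x => by
    unfold energyDensity; nlinarith [sq_nonneg (v x t), hV0 x]
  have hVi : Integrable fun x => |u x t| ^ (p + 1) := by
    refine (he.const_mul (p + 1)).mono' hV.aestronglyMeasurable (ae_of_all _ fun x => ?_)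
    rw [Real.norm_of_nonneg (by positivity)]
    calc |u x t| ^ (p + 1) = (p + 1) * (|u x t| ^ (p + 1) / (p + 1)) := by field_simp
      _ ≤ (p + 1) * energyDensity p u v w x t := by
        refine mul_le_mul_of_nonneg_left ?_ hp1.le
        unfold energyDensity; nlinarith [sq_nonneg (v x t), hW0 x]
  have hWi : Integrable fun x => ∑ i, w i x t ^ 2 := by
    refine (he.const_mul 2).mono' (by fun_prop) (ae_of_all _ fun x => ?_)
    rw [Real.norm_of_nonneg (hW0 x)]
    exact hWe x
  have hH := integral_invBracket_sq_mul_sq_le hd hp hu hw (fun i x => h.lineDeriv_u i x t) hVi hWi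
  refine ⟨he.add hH.1, ?_⟩
  have hmono : ∫ x, ∑ i, w i x t ^ 2 ≤ 2 * ∫ x, energyDensity p u v w x t := by
    rw [← integral_const_mul]
    exact integral_mono hWi (he.const_mul 2) hWe
  rw [integral_add he hH.1]
  linarith [hH.2]

lemma abs_integral_mul_le {χ f J : EuclideanSpace ℝ (Fin d) → ℝ} {C K : ℝ}
    (hC : 0 ≤ C) (hχ : ∀ x, |χ x| ≤ C) (hJ : Integrable J) (hf : ∀ x, |f x| ≤ K * J x) :
    |∫ x, χ x * f x| ≤ C * (K * ∫ x, J x) := by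
  rw [← integral_const_mul, ← integral_const_mul, ← Real.norm_eq_abs]
  refine norm_integral_le_of_norm_le ((hJ.const_mul K).const_mul C) (ae_of_all _ fun x => ?_)
  rw [norm_mul, Real.norm_eq_abs, Real.norm_eq_abs]
  exact mul_le_mul (hχ x) (hf x) (abs_nonneg _) hC

/-- The energy in a fixed ball is integrable in time. -/
lemma WaveJet.integrable_local_energy (hd : 3 ≤ d) (hp : 1 < p) (h : WaveJet p u v a w b c) {E : ℝ}
    (he : ∀ t, Integrable fun x => energyDensity p u v w x t)
    (hE : ∀ t, ∫ x, energyDensity p u v w x t = E) {R : ℝ} (hR : 0 < R) :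
    Integrable fun t => ∫ x in Metric.closedBall (0 : EuclideanSpace ℝ (Fin d)) R,
      energyDensity p u v w x t := by
  obtain ⟨C, hC0, hcut⟩ := exists_cutoff d
  have hp1 : 0 < p + 1 := by linarith
  set K : ℝ := ((d : ℝ) + 3) ^ 2 * (9 * E) with hK
  have hE0 : 0 ≤ E := hE 0 ▸ integral_nonneg fun x => energyDensity_nonneg hp x 0
  have hK0 : 0 ≤ K := by positivity
  have hJ := fun t => h.integral_energy_add_hardy_le hd hp t (he t)
  have hJK : ∀ t, ((d : ℝ) + 3) ^ 2 *
      ∫ x, (energyDensity p u v w x t + invBracket x ^ 2 * u x t ^ 2) ≤ K := fun t => by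
    have := (hJ t).2
    rw [hE t] at this
    exact mul_le_mul_of_nonneg_left this (by positivity)
  have hball : Continuous fun t => ∫ x in Metric.closedBall (0 : EuclideanSpace ℝ (Fin d)) R,
      energyDensity p u v w x t := by
    refine continuous_parametric_integral_of_continuous
      (f := fun t x => energyDensity p u v w x t) ?_ (isCompact_closedBall _ _)
    exact (h.continuous_energyDensity hp).comp (continuous_snd.prodMk continuous_fst)
  have hball0 : ∀ t, 0 ≤ ∫ x in Metric.closedBall (0 : EuclideanSpace ℝ (Fin d)) R,
      energyDensity p u v w x t := fun t => integral_nonneg fun x => energyDensity_nonneg hp x t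
  set δ : ℝ := (p - 1) / (p + 1) * (√(1 + R ^ 2))⁻¹ ^ 3 with hδ
  have hδ0 : 0 < δ := by
    have : 0 < p - 1 := by linarith
    positivity
  have hbound : ∀ T L : ℝ, 0 < T → R ≤ L →
      δ * ∫ t in -T..T, ∫ x in Metric.closedBall (0 : EuclideanSpace ℝ (Fin d)) R,
        energyDensity p u v w x t ≤ 2 * K + 2 * T * (d * (C / L * K)) := by
    intro T L hT hRL
    have hL : 0 < L := hR.trans_le hRL
    obtain ⟨χ, χ', hχ, hχs, hχ', hχs', hχ0, hχ1, hχL, hχd, hχC⟩ := hcut L hL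
    have hcL : 0 ≤ C / L := by positivity
    have hD0 : ∀ x t, 0 ≤ morawetzDensity p u v w x t := fun x t => by
      refine le_trans ?_ (le_morawetzDensity hd hp x t)
      have h1 := energyDensity_nonneg (u := u) (v := v) (w := w) hp x t
      have h2 := invBracket_pos x
      have : 0 < p - 1 := by linarith
      positivity
    have hloc : ∀ t, δ * ∫ x in Metric.closedBall (0 : EuclideanSpace ℝ (Fin d)) R,
        energyDensity p u v w x t ≤ ∫ x, χ x * morawetzDensity p u v w x t := by
      intro t
      have hi := integrable_cutoff_mul hχ hχs (continuous_slice (h.continuous_morawetzDensity hp) t)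
      rw [← integral_const_mul]
      refine le_trans (setIntegral_mono_on ((he t).const_mul δ).integrableOn hi.integrableOn
        Metric.isClosed_closedBall.measurableSet fun x hx => ?_)
        (setIntegral_le_integral hi (ae_of_all _ fun x => mul_nonneg (hχ0 x) (hD0 x t)))
      have hx' : ‖x‖ ≤ R := mem_closedBall_zero_iff.1 hx
      rw [hχL x (hx'.trans hRL), one_mul]
      refine le_trans ?_ (le_morawetzDensity hd hp x t)
      rw [hδ, mul_assoc]
      have h1 := energyDensity_nonneg (u := u) (v := v) (w := w) hp x t
      have h3 := le_invBracket_of_norm_le hx'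
      have : 0 < p - 1 := by linarith
      gcongr
    have hid := localized_integral_sub_eq hχ hχs
      (G := fun x t => v x t * multiplier p u w x t)
      (fun t => (continuous_slice h.cont_v t).mul (continuous_slice h.continuous_multiplier t))
      h.continuous_morawetzRate h.hasDerivAt_morawetz (-T) T
    have hm : ∀ t, |∫ x, χ x * (v x t * multiplier p u w x t)| ≤ K := fun t => by
      refine (abs_integral_mul_le zero_le_one (fun x => ?_) (hJ t).1
        (abs_mul_multiplier_le hd hp · t)).trans ?_
      · rw [abs_of_nonneg (hχ0 x)]; exact hχ1 x
      · rw [one_mul]; exact hJK t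
    have hflux : ∀ t, |∑ i, ∫ x, χ' i x * morawetzFlux p u v w i x t| ≤ d * (C / L * K) :=
      fun t => by
        refine (Finset.abs_sum_le_sum_abs _ _).trans ?_
        have : ∀ i ∈ Finset.univ, |∫ x, χ' i x * morawetzFlux p u v w i x t| ≤ C / L * K :=
          fun i _ => (abs_integral_mul_le hcL (hχC i) (hJ t).1
            (abs_morawetzFlux_le hd hp i · t)).trans (mul_le_mul_of_nonneg_left (hJK t) hcL)
        refine (Finset.sum_le_card_nsmul _ _ _ this).trans ?_
        simp
    have hDc := continuous_localized_integral hχ hχs (h.continuous_morawetzDensity hp)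
    have hRc := continuous_localized_integral hχ hχs h.continuous_morawetzRate
    have hmono : ∫ t in -T..T, δ * ∫ x in Metric.closedBall (0 : EuclideanSpace ℝ (Fin d)) R,
        energyDensity p u v w x t ≤
        ∫ t in -T..T, (d * (C / L * K) - ∫ x, χ x * morawetzRate p u v a w b x t) := by
      refine intervalIntegral.integral_mono_on (by linarith)
        ((hball.const_mul δ).intervalIntegrable _ _)
        ((continuous_const.sub hRc).intervalIntegrable _ _) fun t _ => ?_
      rw [h.integral_cutoff_mul_rate hp hχ hχs hχ' hχs' hχd t]
      linarith [hloc t, (abs_le.1 (hflux t)).1]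
    rw [intervalIntegral.integral_const_mul,
      intervalIntegral.integral_sub (by simp) (hRc.intervalIntegrable _ _), ← hid,
      intervalIntegral.integral_const, smul_eq_mul] at hmono
    linarith [(abs_le.1 (hm T)).1, (abs_le.1 (hm (-T))).2]
  have hbound' : ∀ T : ℝ, 0 < T →
      ∫ t in -T..T, ∫ x in Metric.closedBall (0 : EuclideanSpace ℝ (Fin d)) R,
        energyDensity p u v w x t ≤ 2 * K / δ := by
    intro T hT
    rw [le_div_iff₀' hδ0]
    have hlim : Tendsto (fun L : ℝ => 2 * K + 2 * T * (d * (C / L * K))) atTop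
        (nhds (2 * K + 2 * T * (d * (0 * K)))) :=
      ((((tendsto_const_nhds.div_atTop tendsto_id).mul_const K).const_mul _).const_mul _).const_add _
    simp only [zero_mul, mul_zero, add_zero] at hlim
    exact ge_of_tendsto hlim ((eventually_ge_atTop R).mono fun L hL => hbound T L hT hL)
  refine integrable_of_intervalIntegral_norm_bounded (a := fun T : ℝ => -T) (b := fun T : ℝ => T)
    (l := atTop) (2 * K / δ) (fun T => ?_) tendsto_neg_atTop_atBot tendsto_id ?_
  · exact hball.integrableOn_Icc.mono_set Set.Ioc_subset_Icc_self
  · filter_upwards [eventually_gt_atTop 0] with T hT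
    simp_rw [Real.norm_of_nonneg (hball0 _)]
    exact hbound' T hT

end LocalEnergy

section Slices

variable {f : EuclideanSpace ℝ (Fin d) × ℝ → ℝ} {x : EuclideanSpace ℝ (Fin d)} {t : ℝ}

lemma hasFDerivAt_space_slice (hf : DifferentiableAt ℝ f (x, t)) :
    HasFDerivAt (fun y => f (y, t))
      ((fderiv ℝ f (x, t)).comp (ContinuousLinearMap.inl ℝ (EuclideanSpace ℝ (Fin d)) ℝ)) x :=
  HasFDerivAt.comp x (f := fun y => (y, t)) hf.hasFDerivAt (hasFDerivAt_prodMk_left x t)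

lemma fderiv_space_slice (hf : DifferentiableAt ℝ f (x, t)) (z : EuclideanSpace ℝ (Fin d)) :
    fderiv ℝ (fun y => f (y, t)) x z = fderiv ℝ f (x, t) (z, 0) := by
  rw [(hasFDerivAt_space_slice hf).fderiv]
  simp

lemma hasLineDerivAt_space_slice (hf : DifferentiableAt ℝ f (x, t))
    (z : EuclideanSpace ℝ (Fin d)) :
    HasLineDerivAt ℝ (fun y => f (y, t)) (fderiv ℝ f (x, t) (z, 0)) x z := by
  simpa using (hasFDerivAt_space_slice hf).hasLineDerivAt z

lemma hasDerivAt_time_slice (hf : DifferentiableAt ℝ f (x, t)) :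
    HasDerivAt (fun s => f (x, s)) (fderiv ℝ f (x, t) (0, 1)) t := by
  have h := HasFDerivAt.comp_hasDerivAt t (f := fun s => (x, s)) hf.hasFDerivAt
    ((hasDerivAt_const t x).prodMk (hasDerivAt_id t))
  exact h

end Slices

lemma fderiv_fderiv_apply {f : EuclideanSpace ℝ (Fin d) × ℝ → ℝ}
    {q : EuclideanSpace ℝ (Fin d) × ℝ} (hf : DifferentiableAt ℝ (fderiv ℝ f) q)
    (z z' : EuclideanSpace ℝ (Fin d) × ℝ) :
    fderiv ℝ (fun q' => fderiv ℝ f q' z) q z' = fderiv ℝ (fderiv ℝ f) q z' z := by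
  rw [fderiv_clm_apply hf (differentiableAt_const z)]
  simp

/-- A `C²` solution of the defocusing wave equation, with its partial derivatives of order at most
two, forms a `WaveJet`. -/
lemma waveJet_of_contDiff {p : ℝ} {u : EuclideanSpace ℝ (Fin d) → ℝ → ℝ}
    (hu : ContDiff ℝ 2 (Function.uncurry u))
    (hwave : ∀ (x : EuclideanSpace ℝ (Fin d)) (t : ℝ),
      deriv (fun s => deriv (fun s' => u x s') s) t
        - ∑ i : Fin d, fderiv ℝ (fun y => fderiv ℝ (fun z => u z t) y
            (EuclideanSpace.single i 1)) x (EuclideanSpace.single i 1)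
      = -(|u x t| ^ (p - 1) * u x t)) :
    WaveJet p u (fun x t => fderiv ℝ (Function.uncurry u) (x, t) (0, 1))
      (fun x t => fderiv ℝ (fderiv ℝ (Function.uncurry u)) (x, t) (0, 1) (0, 1))
      (fun i x t => fderiv ℝ (Function.uncurry u) (x, t) (basisVec i, 0))
      (fun i x t => fderiv ℝ (fderiv ℝ (Function.uncurry u)) (x, t) (basisVec i, 0) (0, 1))
      (fun i j x t =>
        fderiv ℝ (fderiv ℝ (Function.uncurry u)) (x, t) (basisVec i, 0) (basisVec j, 0)) := by
  have hU : Differentiable ℝ (Function.uncurry u) := hu.differentiable (by norm_num)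
  have hD : ContDiff ℝ 1 (fderiv ℝ (Function.uncurry u)) := hu.fderiv_right (by norm_num)
  have hDd : Differentiable ℝ (fderiv ℝ (Function.uncurry u)) := hD.differentiable (by norm_num)
  have hDc := hD.continuous
  have hDDc : Continuous (fderiv ℝ (fderiv ℝ (Function.uncurry u))) :=
    hD.continuous_fderiv (by norm_num)
  have hDz : ∀ z, Differentiable ℝ fun q => fderiv ℝ (Function.uncurry u) q z :=
    fun z => hDd.clm_apply (differentiable_const z)
  have hsymm : ∀ q z z', fderiv ℝ (fderiv ℝ (Function.uncurry u)) q z z'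
      = fderiv ℝ (fderiv ℝ (Function.uncurry u)) q z' z := fun q z z' =>
    (hu.contDiffAt.isSymmSndFDerivAt (by simp)).eq z z'
  have htime : ∀ x t z, HasDerivAt (fun s => fderiv ℝ (Function.uncurry u) (x, s) z)
      (fderiv ℝ (fderiv ℝ (Function.uncurry u)) (x, t) (0, 1) z) t := fun x t z =>
    (hasDerivAt_time_slice (hDz z (x, t))).congr_deriv (fderiv_fderiv_apply (hDd _) _ _)
  have hspace : ∀ x t z y, HasLineDerivAt ℝ (fun y => fderiv ℝ (Function.uncurry u) (y, t) z)
      (fderiv ℝ (fderiv ℝ (Function.uncurry u)) (x, t) (y, 0) z) x y := fun x t z y =>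
    hasLineDerivAt_congr_deriv (hasLineDerivAt_space_slice (hDz z (x, t)) y)
      (fderiv_fderiv_apply (hDd _) _ _)
  have hut : ∀ x t, HasDerivAt (u x) (fderiv ℝ (Function.uncurry u) (x, t) (0, 1)) t :=
    fun x t => hasDerivAt_time_slice (hU (x, t))
  exact
  { cont_u := hu.continuous
    cont_v := hDc.clm_apply continuous_const
    cont_a := (hDDc.clm_apply continuous_const).clm_apply continuous_const
    cont_w := fun i => hDc.clm_apply continuous_const
    cont_b := fun i => (hDDc.clm_apply continuous_const).clm_apply continuous_const
    cont_c := fun i j => (hDDc.clm_apply continuous_const).clm_apply continuous_const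
    deriv_u := hut
    deriv_v := fun x t => htime x t _
    deriv_w := fun i x t => (htime x t _).congr_deriv (hsymm _ _ _)
    lineDeriv_u := fun i x t => hasLineDerivAt_space_slice (hU (x, t)) _
    lineDeriv_v := fun i x t => hspace x t _ _
    lineDeriv_w := fun i j x t => hspace x t _ _
    symm := fun i j x t => hsymm _ _ _
    wave := fun x t => by
      have h := hwave x t
      have h1 : (fun s => deriv (fun s' => u x s') s)
          = fun s => fderiv ℝ (Function.uncurry u) (x, s) (0, 1) := funext fun s => (hut x s).deriv
      have h2 : ∀ i : Fin d, (fun y => fderiv ℝ (fun z => u z t) y (basisVec i))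
          = fun y => fderiv ℝ (Function.uncurry u) (y, t) (basisVec i, 0) :=
        fun i => funext fun y => fderiv_space_slice (hU (y, t)) _
      have h3 : ∀ i : Fin d,
          fderiv ℝ (fun y => fderiv ℝ (Function.uncurry u) (y, t) (basisVec i, 0)) x (basisVec i)
            = fderiv ℝ (fderiv ℝ (Function.uncurry u)) (x, t) (basisVec i, 0) (basisVec i, 0) :=
        fun i => (fderiv_space_slice (hDz (basisVec i, 0) (x, t)) _).trans
          (fderiv_fderiv_apply (hDd _) _ _)
      simp only [h1, h2, h3, (htime x t _).deriv] at h
      linarith }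

lemma energyDensity_eq_gradient {p : ℝ} {u : EuclideanSpace ℝ (Fin d) → ℝ → ℝ}
    (hu : ContDiff ℝ 2 (Function.uncurry u)) (x : EuclideanSpace ℝ (Fin d)) (t : ℝ) :
    ‖gradient (fun y => u y t) x‖ ^ 2 / 2 + (deriv (u x) t) ^ 2 / 2
        + |u x t| ^ (p + 1) / (p + 1)
      = energyDensity p u (fun x t => fderiv ℝ (Function.uncurry u) (x, t) (0, 1))
        (fun i x t => fderiv ℝ (Function.uncurry u) (x, t) (basisVec i, 0)) x t := by
  have hU : Differentiable ℝ (Function.uncurry u) := hu.differentiable (by norm_num)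
  have hgrad : ∀ i, gradient (fun y => u y t) x i
      = fderiv ℝ (Function.uncurry u) (x, t) (basisVec i, 0) := fun i => by
    rw [← fderiv_space_slice (hU (x, t)) (basisVec i)]
    change _ = fderiv ℝ (fun y => u y t) x (basisVec i)
    have h : inner ℝ (gradient (fun y => u y t) x) (basisVec i)
        = fderiv ℝ (fun y => u y t) x (basisVec i) := by
      rw [gradient, InnerProductSpace.toDual_symm_apply]
    rw [← h, EuclideanSpace.inner_single_right]
    simp
  have hut : deriv (u x) t = fderiv ℝ (Function.uncurry u) (x, t) (0, 1) :=
    (hasDerivAt_time_slice (hU (x, t))).deriv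
  simp only [energyDensity, EuclideanSpace.real_norm_sq_eq, hgrad, hut]

/-- The mass of `f` outside the ball of radius `s` is `o(s^{-κ})` when `(1 + ‖x‖^κ) f` is
integrable. -/
lemma exists_tail_le_mul_rpow_neg {κ : ℝ} (hκ : 0 < κ) {f : EuclideanSpace ℝ (Fin d) → ℝ}
    (hf : Integrable f) (hf0 : ∀ x, 0 ≤ f x) (hw : Integrable fun x => (1 + ‖x‖ ^ κ) * f x)
    {ε : ℝ} (hε : 0 < ε) :
    ∃ S : ℝ, 0 < S ∧ ∀ s, S ≤ s → ∫ x in {x | s < ‖x‖}, f x ≤ ε * s ^ (-κ) := by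
  have hmeas : ∀ s : ℝ, MeasurableSet {x : EuclideanSpace ℝ (Fin d) | s < ‖x‖} := fun s =>
    measurableSet_lt measurable_const measurable_norm
  have hlim : Tendsto (fun s : ℝ => ∫ x in {x | s < ‖x‖}, (1 + ‖x‖ ^ κ) * f x) atTop (nhds 0) := by
    have h : Tendsto (fun s : ℝ => ∫ x, {x | s < ‖x‖}.indicator
        (fun x => (1 + ‖x‖ ^ κ) * f x) x) atTop
        (nhds (∫ _ : EuclideanSpace ℝ (Fin d), (0 : ℝ))) := by
      refine tendsto_integral_filter_of_dominated_convergence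
        (fun x => ‖(1 + ‖x‖ ^ κ) * f x‖) ?_ ?_ hw.norm ?_
      · exact Eventually.of_forall fun s => hw.aestronglyMeasurable.indicator (hmeas s)
      · exact Eventually.of_forall fun s => Eventually.of_forall fun x =>
          norm_indicator_le_norm_self _ _
      · refine Eventually.of_forall fun x => tendsto_const_nhds.congr' ?_
        filter_upwards [eventually_ge_atTop ‖x‖] with s hs
        rw [Set.indicator_of_notMem]
        simpa using hs
    simpa [integral_indicator (hmeas _)] using h
  obtain ⟨S, hS⟩ := eventually_atTop.1 (hlim.eventually_le_const hε)
  refine ⟨max S 1, by positivity, fun s hs => ?_⟩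
  have hs0 : 0 < s := lt_of_lt_of_le (by positivity) hs
  have hpow : 0 < s ^ κ := rpow_pos_of_pos hs0 κ
  have hle : s ^ κ * ∫ x in {x | s < ‖x‖}, f x ≤ ε := by
    rw [← integral_const_mul]
    refine le_trans (setIntegral_mono_on (hf.const_mul _).integrableOn hw.integrableOn (hmeas s)
      fun x hx => ?_) (hS s ((le_max_left _ _).trans hs))
    have : s ^ κ ≤ ‖x‖ ^ κ := rpow_le_rpow hs0.le (le_of_lt hx) hκ.le
    exact mul_le_mul_of_nonneg_right (by linarith) (hf0 x)
  rw [rpow_neg hs0.le, ← div_eq_mul_inv, le_div_iff₀ hpow]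
  linarith

/-- A bounded antitone function which is `o(s^{-κ})` has primitive `o(t^{1-κ})`. -/
lemma tendsto_integral_div_rpow {κ E : ℝ} (hκ : κ < 1) {G : ℝ → ℝ}
    (hG : Antitone G) (hG0 : ∀ s, 0 ≤ G s) (hGE : ∀ s, G s ≤ E)
    (hdecay : ∀ ε > 0, ∃ S : ℝ, 0 < S ∧ ∀ s, S ≤ s → G s ≤ ε * s ^ (-κ)) :
    Tendsto (fun t : ℝ => (∫ s in (0 : ℝ)..t, G s) / t ^ (1 - κ)) atTop (nhds 0) := by
  have hκ1 : 0 < 1 - κ := by linarith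
  have hGint : ∀ a b, IntervalIntegrable G volume a b := fun a b =>
    (hG.antitoneOn _).intervalIntegrable
  refine Metric.tendsto_atTop.2 fun ε hε => ?_
  obtain ⟨S, hS0, hS⟩ := hdecay ((1 - κ) * ε / 2) (by positivity)
  have hlim : Tendsto (fun t : ℝ => S * E / t ^ (1 - κ)) atTop (nhds 0) :=
    (tendsto_rpow_atTop hκ1).const_div_atTop _
  obtain ⟨T, hT⟩ := eventually_atTop.1 (hlim.eventually_lt_const (half_pos hε))
  refine ⟨max T S, fun t ht => ?_⟩
  have hSt : S ≤ t := (le_max_right _ _).trans ht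
  have ht0 : 0 < t := hS0.trans_le hSt
  have htp : 0 < t ^ (1 - κ) := rpow_pos_of_pos ht0 _
  have hnonneg : 0 ≤ ∫ s in (0 : ℝ)..t, G s :=
    intervalIntegral.integral_nonneg ht0.le fun s _ => hG0 s
  have hnear : ∫ s in (0 : ℝ)..S, G s ≤ S * E := by
    have h := intervalIntegral.integral_mono_on hS0.le (hGint 0 S)
      (intervalIntegrable_const (c := E)) fun s _ => hGE s
    simpa using h
  have hrpow : ∀ a b, IntervalIntegrable (fun s : ℝ => s ^ (-κ)) volume a b := fun a b =>
    intervalIntegral.intervalIntegrable_rpow' (by linarith)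
  have hfar : ∫ s in S..t, G s ≤ ε / 2 * t ^ (1 - κ) := by
    have h := intervalIntegral.integral_mono_on hSt (hGint S t)
      ((hrpow S t).const_mul ((1 - κ) * ε / 2)) fun s hs => hS s hs.1
    rw [intervalIntegral.integral_const_mul, integral_rpow (Or.inl (by linarith)),
      show -κ + 1 = 1 - κ by ring] at h
    refine h.trans ?_
    have hSp : 0 ≤ S ^ (1 - κ) := rpow_nonneg hS0.le _
    rw [show (1 - κ) * ε / 2 * ((t ^ (1 - κ) - S ^ (1 - κ)) / (1 - κ))
      = ε / 2 * (t ^ (1 - κ) - S ^ (1 - κ)) by field_simp]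
    exact mul_le_mul_of_nonneg_left (by linarith) (by positivity)
  rw [dist_zero_right, norm_of_nonneg (by positivity), div_lt_iff₀ htp,
    ← intervalIntegral.integral_add_adjacent_intervals (hGint 0 S) (hGint S t)]
  have hT' := hT t ((le_max_left _ _).trans ht)
  rw [div_lt_iff₀ htp] at hT'
  linarith

lemma intervalIntegrable_comp_sub_abs {G : ℝ → ℝ} (hG : Antitone G) (t : ℝ) :
    IntervalIntegrable (fun s => G (t - |s|)) volume (-t) 0 ∧
      IntervalIntegrable (fun s => G (t - |s|)) volume 0 t := by
  have hright : IntervalIntegrable (fun s => G (t - |s|)) volume 0 |t| := by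
    refine MonotoneOn.intervalIntegrable fun a ha b hb hab => hG ?_
    rw [Set.uIcc_of_le (abs_nonneg t)] at ha hb
    rw [abs_of_nonneg ha.1, abs_of_nonneg hb.1]
    linarith
  have hleft : IntervalIntegrable (fun s => G (t - |s|)) volume (-|t|) 0 := by
    refine AntitoneOn.intervalIntegrable fun a ha b hb hab => hG ?_
    rw [Set.uIcc_of_le (by simp)] at ha hb
    rw [abs_of_nonpos ha.2, abs_of_nonpos hb.2]
    linarith
  rcases abs_cases t with h | h
  · rw [h.1] at hleft hright
    exact ⟨hleft, hright⟩
  · rw [h.1] at hleft hright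
    exact ⟨hright.symm, by simpa using hleft.symm⟩

lemma integral_comp_sub_abs {G : ℝ → ℝ} (hG : Antitone G) {t : ℝ} (ht : 0 ≤ t) :
    ∫ s in -t..t, G (t - |s|) = 2 * ∫ s in (0 : ℝ)..t, G s := by
  obtain ⟨hleft, hright⟩ := intervalIntegrable_comp_sub_abs hG t
  have h1 : ∫ s in -t..0, G (t - |s|) = ∫ s in (0 : ℝ)..t, G s := by
    rw [intervalIntegral.integral_congr (g := fun s => G (t + s)) fun s hs => ?_]
    · simp
    · rw [Set.uIcc_of_le (by linarith)] at hs
      simp [abs_of_nonpos hs.2]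
  have h2 : ∫ s in (0 : ℝ)..t, G (t - |s|) = ∫ s in (0 : ℝ)..t, G s := by
    rw [intervalIntegral.integral_congr (g := fun s => G (t - s)) fun s hs => ?_]
    · simp
    · rw [Set.uIcc_of_le ht] at hs
      simp [abs_of_nonneg hs.1]
  rw [← intervalIntegral.integral_add_adjacent_intervals hleft hright, h1, h2, two_mul]

lemma closedBall_ae_eq_ball (hd : 3 ≤ d) (R : ℝ) :
    Metric.closedBall (0 : EuclideanSpace ℝ (Fin d)) R =ᵐ[volume] Metric.ball 0 R := by
  have : Nonempty (Fin d) := ⟨⟨0, by omega⟩⟩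
  have h := Measure.addHaar_sphere (volume : Measure (EuclideanSpace ℝ (Fin d))) 0 R
  rw [← Metric.closedBall_sdiff_ball] at h
  exact ae_eq_set.2 ⟨h, by simp [Set.sdiff_eq_empty.2 Metric.ball_subset_closedBall]⟩

lemma compl_closedBall_eq (R : ℝ) :
    (Metric.closedBall (0 : EuclideanSpace ℝ (Fin d)) R)ᶜ = {x | R < ‖x‖} := by
  ext x
  simp

/-- The energy in a slightly shrunken light cone is controlled by the average of the exterior
energy of the data, as soon as the energy in each ball is integrable in time. -/
lemma mul_setIntegral_ball_le {e : EuclideanSpace ℝ (Fin d) → ℝ → ℝ} (hd : 3 ≤ d)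
    (he0 : ∀ x t, 0 ≤ e x t) (hint : ∀ t : ℝ, Integrable fun x => e x t)
    (hlocal : ∀ R : ℝ, 0 < R → Integrable fun t => ∫ x in Metric.closedBall 0 R, e x t)
    (hforward : ∀ η t t' : ℝ, η ≤ t → t ≤ t' →
      (∫ x in Metric.ball (0 : EuclideanSpace ℝ (Fin d)) (t - η), e x t)
        ≤ ∫ x in Metric.ball (0 : EuclideanSpace ℝ (Fin d)) (t' - η), e x t')
    (hbackward : ∀ t' s : ℝ,
      (∫ x in {x : EuclideanSpace ℝ (Fin d) | s < ‖x‖}, e x t')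
        ≤ ∫ x in {x : EuclideanSpace ℝ (Fin d) | s - |t'| < ‖x‖}, e x 0)
    (hmorawetz : ∀ R : ℝ, 0 < R →
      (∫ t' in {t : ℝ | R < |t|},
          ∫ x in Metric.ball (0 : EuclideanSpace ℝ (Fin d)) R, e x t')
        ≤ ∫ t' in Set.Ioc (-R) R,
            ∫ x in (Metric.ball (0 : EuclideanSpace ℝ (Fin d)) R)ᶜ, e x t')
    {t h : ℝ} (ht : 0 < t) (hh : 0 ≤ h) (hht : h ≤ t) :
    h * (∫ x in Metric.ball (0 : EuclideanSpace ℝ (Fin d)) (t - h), e x t)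
      ≤ 2 * ∫ s in (0 : ℝ)..t, ∫ x in {x : EuclideanSpace ℝ (Fin d) | s < ‖x‖}, e x 0 := by
  have hmono : ∀ (τ : ℝ) {A B : Set (EuclideanSpace ℝ (Fin d))}, A ⊆ B →
      ∫ x in A, e x τ ≤ ∫ x in B, e x τ := fun τ A B hAB =>
    setIntegral_mono_set (hint τ).integrableOn (Eventually.of_forall fun x => he0 x τ)
      hAB.eventuallyLE
  have hnonneg : ∀ (τ : ℝ) (A : Set (EuclideanSpace ℝ (Fin d))), 0 ≤ ∫ x in A, e x τ :=
    fun τ A => integral_nonneg fun x => he0 x τ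
  have hball : Integrable fun τ => ∫ x in Metric.ball (0 : EuclideanSpace ℝ (Fin d)) t, e x τ := by
    simpa only [setIntegral_congr_set (closedBall_ae_eq_ball hd t)] using hlocal t ht
  have hcompl : ∀ τ, ∫ x in (Metric.ball (0 : EuclideanSpace ℝ (Fin d)) t)ᶜ, e x τ
      = ∫ x in {x : EuclideanSpace ℝ (Fin d) | t < ‖x‖}, e x τ := fun τ => by
    rw [← compl_closedBall_eq, setIntegral_congr_set (closedBall_ae_eq_ball hd t).compl]
  have hG : Antitone fun s : ℝ => ∫ x in {x : EuclideanSpace ℝ (Fin d) | s < ‖x‖}, e x 0 :=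
    fun a b hab => hmono 0 fun x hx => lt_of_le_of_lt hab hx
  calc h * (∫ x in Metric.ball (0 : EuclideanSpace ℝ (Fin d)) (t - h), e x t)
      = ∫ _ in Set.Ioc t (t + h),
          ∫ x in Metric.ball (0 : EuclideanSpace ℝ (Fin d)) (t - h), e x t := by
        simp [hh]
    _ ≤ ∫ τ in Set.Ioc t (t + h), ∫ x in Metric.ball (0 : EuclideanSpace ℝ (Fin d)) t, e x τ := by
        refine setIntegral_mono_on (by simp) hball.integrableOn measurableSet_Ioc fun τ hτ => ?_
        exact (hforward h t τ hht hτ.1.le).trans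
          (hmono τ (Metric.ball_subset_ball (by linarith [hτ.2])))
    _ ≤ ∫ τ in {τ : ℝ | t < |τ|}, ∫ x in Metric.ball (0 : EuclideanSpace ℝ (Fin d)) t, e x τ :=
        setIntegral_mono_set hball.integrableOn (Eventually.of_forall fun τ => hnonneg τ _)
          (LE.le.eventuallyLE fun τ hτ => hτ.1.trans_le (le_abs_self τ))
    _ ≤ ∫ τ in Set.Ioc (-t) t, ∫ x in {x : EuclideanSpace ℝ (Fin d) | t < ‖x‖}, e x τ := by
        simpa only [hcompl] using hmorawetz t ht
    _ ≤ ∫ τ in Set.Ioc (-t) t, ∫ x in {x : EuclideanSpace ℝ (Fin d) | t - |τ| < ‖x‖}, e x 0 := by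
        refine integral_mono_of_nonneg (Eventually.of_forall fun τ => hnonneg τ _) ?_
          (Eventually.of_forall fun τ => hbackward τ t)
        obtain ⟨hleft, hright⟩ := intervalIntegrable_comp_sub_abs hG t
        exact (intervalIntegrable_iff_integrableOn_Ioc_of_le (by linarith)).1 (hleft.trans hright)
    _ = 2 * ∫ s in (0 : ℝ)..t, ∫ x in {x : EuclideanSpace ℝ (Fin d) | s < ‖x‖}, e x 0 := by
        rw [← intervalIntegral.integral_of_le (by linarith)]
        exact integral_comp_sub_abs hG ht.le

end WaveDecay

/-- Interior energy decay: under finite speed of energy propagation, the Morawetz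
energy-distribution inequality, and `κ`-weighted energy decay of the data, the energy
in the region `{|x| < t - c t^{1-κ}}` tends to `0` as `t → +∞`. -/
theorem center_energy_decay (d : ℕ) (hd : 3 ≤ d) (p κ E : ℝ)
    (hp : 1 < p) (hκ : 0 < κ) (hκ' : κ < 1) (hE : 0 < E)
    (u : EuclideanSpace ℝ (Fin d) → ℝ → ℝ)
    (hu : ContDiff ℝ 2 (Function.uncurry u))
    (hwave : ∀ (x : EuclideanSpace ℝ (Fin d)) (t : ℝ),
      deriv (fun s => deriv (fun s' => u x s') s) t
        - ∑ i : Fin d, fderiv ℝ (fun y => fderiv ℝ (fun z => u z t) y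
            (EuclideanSpace.single i 1)) x (EuclideanSpace.single i 1)
      = -(|u x t| ^ (p - 1) * u x t))
    (e : EuclideanSpace ℝ (Fin d) → ℝ → ℝ)
    (he : e = fun x t => ‖gradient (fun y => u y t) x‖ ^ 2 / 2
      + (deriv (u x) t) ^ 2 / 2 + |u x t| ^ (p + 1) / (p + 1))
    (hint : ∀ t : ℝ, Integrable (fun x => e x t))
    (henergy : ∀ t : ℝ, (∫ x : EuclideanSpace ℝ (Fin d), e x t) = E)
    -- (i) finite speed of energy propagation:
    (hforward : ∀ η t t' : ℝ, η ≤ t → t ≤ t' →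
      (∫ x in Metric.ball (0 : EuclideanSpace ℝ (Fin d)) (t - η), e x t)
        ≤ ∫ x in Metric.ball (0 : EuclideanSpace ℝ (Fin d)) (t' - η), e x t')
    (hbackward : ∀ t' s : ℝ,
      (∫ x in {x : EuclideanSpace ℝ (Fin d) | s < ‖x‖}, e x t')
        ≤ ∫ x in {x : EuclideanSpace ℝ (Fin d) | s - |t'| < ‖x‖}, e x 0)
    -- (ii) Morawetz consequence:
    (hmorawetz : ∀ R : ℝ, 0 < R →
      (∫ t' in {t : ℝ | R < |t|},
          ∫ x in Metric.ball (0 : EuclideanSpace ℝ (Fin d)) R, e x t')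
        ≤ ∫ t' in Set.Ioc (-R) R,
            ∫ x in (Metric.ball (0 : EuclideanSpace ℝ (Fin d)) R)ᶜ, e x t')
    -- (iii) weighted energy of the data:
    (hweight : Integrable (fun x : EuclideanSpace ℝ (Fin d) => (1 + ‖x‖ ^ κ) * e x 0)) :
    ∀ c : ℝ, 0 < c →
      Tendsto (fun t : ℝ =>
          ∫ x in Metric.ball (0 : EuclideanSpace ℝ (Fin d)) (t - c * t ^ (1 - κ)), e x t)
        atTop (nhds 0) := by
  have hjet := WaveDecay.waveJet_of_contDiff hu hwave
  have heq : e = WaveDecay.energyDensity p u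
      (fun x t => fderiv ℝ (Function.uncurry u) (x, t) (0, 1))
      (fun i x t => fderiv ℝ (Function.uncurry u) (x, t) (WaveDecay.basisVec i, 0)) := by
    subst he
    exact funext fun x => funext fun t => WaveDecay.energyDensity_eq_gradient hu x t
  have he0 : ∀ x t, 0 ≤ e x t := fun x t => by
    rw [heq]
    exact WaveDecay.energyDensity_nonneg hp x t
  have hlocal : ∀ R : ℝ, 0 < R → Integrable fun t =>
      ∫ x in Metric.closedBall (0 : EuclideanSpace ℝ (Fin d)) R, e x t := fun R hR => by
    subst heq
    exact hjet.integrable_local_energy hd hp hint henergy hR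
  intro c hc
  have hκ1 : 0 < 1 - κ := by linarith
  have hG : Antitone fun s : ℝ => ∫ x in {x : EuclideanSpace ℝ (Fin d) | s < ‖x‖}, e x 0 :=
    fun a b hab => setIntegral_mono_set (hint 0).integrableOn
      (Eventually.of_forall fun x => he0 x 0)
      (LE.le.eventuallyLE fun x hx => lt_of_le_of_lt hab hx)
  have hlim := (WaveDecay.tendsto_integral_div_rpow hκ' hG
    (fun s => integral_nonneg fun x => he0 x 0)
    (fun s => (setIntegral_le_integral (hint 0) (Eventually.of_forall fun x => he0 x 0)).trans
      (henergy 0).le)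
    (fun ε hε => WaveDecay.exists_tail_le_mul_rpow_neg hκ (hint 0) (fun x => he0 x 0)
      hweight hε)).const_mul (2 / c)
  rw [mul_zero] at hlim
  have hsmall : Tendsto (fun t : ℝ => c / t ^ κ) atTop (nhds 0) :=
    (tendsto_rpow_atTop hκ).const_div_atTop c
  refine squeeze_zero' (Eventually.of_forall fun t => integral_nonneg fun x => he0 x t) ?_ hlim
  filter_upwards [eventually_gt_atTop 0, hsmall.eventually_le_const one_pos] with t ht hct
  have htp : 0 < t ^ (1 - κ) := rpow_pos_of_pos ht _
  have hht : c * t ^ (1 - κ) ≤ t := by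
    rw [rpow_sub ht, rpow_one, show c * (t / t ^ κ) = c / t ^ κ * t by ring]
    exact mul_le_of_le_one_left ht.le hct
  have hmain := WaveDecay.mul_setIntegral_ball_le hd he0 hint hlocal hforward hbackward hmorawetz
    ht (by positivity) hht
  rw [div_mul_div_comm, le_div_iff₀ (by positivity), mul_comm]
  exact hmain
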